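/- arXiv:1207.4016 — 9 statements merged into one kernel-verified Lean document; each statement's English description precedes it below -/
import Mathlib

section
/- Let n ≥ 1 and A, B > 0. Let F₀, Fₑ : ℝⁿ × ℝ → ℝⁿ be continuously differentiable in the variable z, with the bounds, valid for all z, z' ∈ ℝⁿ and t ∈ ℝ: ‖D_zF₀(z,t)‖ ≤ A, ‖D_zFₑ(z,t)‖ ≤ A, ‖D_zFₑ(z,t) − D_zFₑ(z',t)‖ ≤ A‖z − z'‖, ‖Fₑ(z,t) − F₀(z,t)‖ ≤ B, and ‖D_zFₑ(z,t) − D_zF₀(z,t)‖ ≤ B. Let T > 0, let z, zₑ : [0,T] → ℝⁿ be differentiable curves with z'(t) = F₀(z(t),t), zₑ'(t) = Fₑ(zₑ(t),t) and z(0) = zₑ(0), and let v ∈ ℝⁿ. Let δz, δzₑ : [0,T] → ℝⁿ solve the variational equations δz'(t) = D_zF₀(z(t),t)·δz(t) and δzₑ'(t) = D_zFₑ(zₑ(t),t)·δzₑ(t) with δz(0) = δzₑ(0) = v. Then for every t ∈ [0,T], ‖δzₑ(t) − δz(t)‖ ≤ (B/A)‖v‖(1 − e^{−At})e^{2At}.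 -/
open Set

/-!
Along the perturbed trajectory `x` and the unperturbed one `z`, the operators driving the
variational equations differ by at most `A * ‖x - z‖ + B`. Grönwall's inequality bounds `‖x - z‖`
by the solution `d` of `d' = A * d + B`, `d 0 = 0`, so the operators differ by at most
`d' = B * exp (A * t)`, while the unperturbed tangent vector is bounded by `‖v‖ * exp (A * t)`.
Hence the difference of the tangent vectors obeys Grönwall's inequality with rate `A` and forcing
`B * ‖v‖ * exp (2 * A * t)`.
-/

open Filter Topology
open scoped NNReal

section

variable {E : Type*} [NormedAddCommGroup E] [NormedSpace ℝ E] {a b : ℝ}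

section Gronwall

theorem mul_gronwallBound_zero_add (K ε x : ℝ) :
    K * gronwallBound 0 K ε x + ε = ε * Real.exp (K * x) := by
  rcases eq_or_ne K 0 with rfl | hK
  · simp
  · rw [gronwallBound_of_K_ne_0 hK]
    field_simp
    ring

variable {f f' : ℝ → E} {K : ℝ}

theorem norm_le_of_norm_deriv_right_le_mul_add {u u' g : ℝ → ℝ}
    (hf : ContinuousOn f (Icc a b)) (hf' : ∀ x ∈ Ico a b, HasDerivWithinAt f (f' x) (Ici x) x)
    (hu : ContinuousOn u (Icc a b)) (hu' : ∀ x ∈ Ico a b, HasDerivWithinAt u (u' x) (Ici x) x)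
    (ha : ‖f a‖ ≤ u a) (hf_bound : ∀ x ∈ Ico a b, ‖f' x‖ ≤ K * ‖f x‖ + g x)
    (hu_bound : ∀ x ∈ Ico a b, K * u x + g x ≤ u' x) :
    ∀ x ∈ Icc a b, ‖f x‖ ≤ u x := by
  intro x hx
  -- Adding the solution of `y' = K * y + r` makes `u` a strict supersolution.
  have le_perturbed : ∀ r > 0, ‖f x‖ ≤ u x + gronwallBound 0 K r (x - a) := by
    intro r hr
    have hB (y : ℝ) := hasDerivAt_gronwallBound_shift 0 K r y a
    refine image_norm_le_of_norm_deriv_right_lt_deriv_boundary' hf hf'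
      (B := fun y ↦ u y + gronwallBound 0 K r (y - a))
      (by simpa only [sub_self, gronwallBound_x0, add_zero] using ha)
      (hu.add fun y _ ↦ (hB y).continuousAt.continuousWithinAt)
      (fun y hy ↦ (hu' y hy).add (hB y).hasDerivWithinAt) (fun y hy hfy ↦ ?_) hx
    have hf_le := hf_bound y hy
    rw [hfy] at hf_le
    linarith [hu_bound y hy]
  have tendsto_perturbed :
      Tendsto (fun r ↦ u x + gronwallBound 0 K r (x - a)) (𝓝[>] 0) (𝓝 (u x)) := by
    have h := ((gronwallBound_continuous_ε 0 K (x - a)).tendsto 0).const_add (u x)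
    rw [gronwallBound_ε0_δ0, add_zero] at h
    exact h.mono_left nhdsWithin_le_nhds
  exact ge_of_tendsto tendsto_perturbed (eventually_mem_nhdsWithin.mono le_perturbed)

theorem norm_le_of_norm_deriv_right_le_mul_add_exp {δ ε L : ℝ}
    (hf : ContinuousOn f (Icc a b)) (hf' : ∀ x ∈ Ico a b, HasDerivWithinAt f (f' x) (Ici x) x)
    (ha : ‖f a‖ ≤ δ)
    (bound : ∀ x ∈ Ico a b, ‖f' x‖ ≤ K * ‖f x‖ + ε * Real.exp (L * (x - a))) :
    ∀ x ∈ Icc a b,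
      ‖f x‖ ≤ Real.exp (K * (x - a)) * (δ + gronwallBound 0 (L - K) ε (x - a)) := by
  let u : ℝ → ℝ := fun x ↦ Real.exp (K * (x - a)) * (δ + gronwallBound 0 (L - K) ε (x - a))
  have hu (x : ℝ) : HasDerivAt u (K * u x + ε * Real.exp (L * (x - a))) x := by
    have hexp : HasDerivAt (fun x ↦ Real.exp (K * (x - a))) (Real.exp (K * (x - a)) * K) x := by
      simpa using (((hasDerivAt_id x).sub_const a).const_mul K).exp
    have hsplit : Real.exp (L * (x - a)) =
        Real.exp (K * (x - a)) * Real.exp ((L - K) * (x - a)) := by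
      rw [← Real.exp_add]
      ring_nf
    refine (hexp.mul
      ((hasDerivAt_gronwallBound_shift 0 (L - K) ε x a).const_add δ)).congr_deriv ?_
    rw [mul_gronwallBound_zero_add, hsplit]
    ring
  exact norm_le_of_norm_deriv_right_le_mul_add hf hf'
    (fun x _ ↦ (hu x).continuousAt.continuousWithinAt) (fun x _ ↦ (hu x).hasDerivWithinAt)
    (by simpa [u, gronwallBound_x0] using ha) bound fun _ _ ↦ le_rfl

end Gronwall

theorem hasDerivWithinAt_Ici_of_isIntegralCurveOn_Icc {γ : ℝ → E} {v : ℝ → E → E} {t : ℝ}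
    (hγ : IsIntegralCurveOn γ v (Icc a b)) (ht : t ∈ Ico a b) :
    HasDerivWithinAt γ (v t (γ t)) (Ici t) t :=
  (hγ t (Ico_subset_Icc_self ht)).mono_of_mem_nhdsWithin (Icc_mem_nhdsGE_of_mem ht)

section LinearODE

variable {P Q : ℝ → E →L[ℝ] E} {ξ η : ℝ → E} {K L M ε : ℝ}

theorem norm_le_mul_exp_of_linear_ODE (hQ : ∀ t ∈ Ico a b, ‖Q t‖ ≤ L)
    (hη : IsIntegralCurveOn η (fun t ↦ Q t) (Icc a b)) :
    ∀ t ∈ Icc a b, ‖η t‖ ≤ ‖η a‖ * Real.exp (L * (t - a)) := by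
  intro t ht
  rw [← gronwallBound_ε0]
  exact norm_le_gronwallBound_of_norm_deriv_right_le hη.continuousOn
    (fun s hs ↦ hasDerivWithinAt_Ici_of_isIntegralCurveOn_Icc hη hs) le_rfl
    (fun s hs ↦ by simpa using (Q s).le_of_opNorm_le (hQ s hs) (η s)) t ht

theorem norm_clm_apply_sub_clm_apply_le (P Q : E →L[ℝ] E) (x y : E) :
    ‖P x - Q y‖ ≤ ‖P‖ * ‖x - y‖ + ‖P - Q‖ * ‖y‖ :=
  calc ‖P x - Q y‖ = ‖P (x - y) + (P - Q) y‖ := by simp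
    _ ≤ ‖P‖ * ‖x - y‖ + ‖P - Q‖ * ‖y‖ :=
      norm_add_le_of_le (P.le_opNorm _) ((P - Q).le_opNorm _)

theorem norm_sub_le_of_linear_ODE (hP : ∀ t ∈ Ico a b, ‖P t‖ ≤ K)
    (hQ : ∀ t ∈ Ico a b, ‖Q t‖ ≤ L)
    (hPQ : ∀ t ∈ Ico a b, ‖P t - Q t‖ ≤ ε * Real.exp (M * (t - a)))
    (hξ : IsIntegralCurveOn ξ (fun t ↦ P t) (Icc a b))
    (hη : IsIntegralCurveOn η (fun t ↦ Q t) (Icc a b)) :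
    ∀ t ∈ Icc a b, ‖ξ t - η t‖ ≤ Real.exp (K * (t - a)) *
      (‖ξ a - η a‖ + gronwallBound 0 (M + L - K) (ε * ‖η a‖) (t - a)) := by
  refine norm_le_of_norm_deriv_right_le_mul_add_exp (hξ.continuousOn.sub hη.continuousOn)
    (fun t ht ↦ (hasDerivWithinAt_Ici_of_isIntegralCurveOn_Icc hξ ht).sub
      (hasDerivWithinAt_Ici_of_isIntegralCurveOn_Icc hη ht)) le_rfl fun t ht ↦ ?_
  have hη_le := norm_le_mul_exp_of_linear_ODE hQ hη t (Ico_subset_Icc_self ht)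
  calc ‖P t (ξ t) - Q t (η t)‖
      ≤ ‖P t‖ * ‖ξ t - η t‖ + ‖P t - Q t‖ * ‖η t‖ := norm_clm_apply_sub_clm_apply_le ..
    _ ≤ K * ‖ξ t - η t‖ +
          ε * Real.exp (M * (t - a)) * (‖η a‖ * Real.exp (L * (t - a))) :=
        add_le_add (mul_le_mul_of_nonneg_right (hP t ht) (norm_nonneg _))
          (mul_le_mul (hPQ t ht) hη_le (norm_nonneg _) ((norm_nonneg _).trans (hPQ t ht)))
    _ = K * ‖ξ t - η t‖ + ε * ‖η a‖ * Real.exp ((M + L) * (t - a)) := by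
        rw [add_mul M, Real.exp_add]
        ring

end LinearODE

section VariationalEquation

variable {v w : ℝ → E → E} {x z ξ η : ℝ → E} {B : ℝ}

theorem norm_sub_le_of_perturbed_ODE {K : ℝ≥0} (hw : ∀ t, LipschitzWith K (w t))
    (hwv : ∀ t y, ‖w t y - v t y‖ ≤ B)
    (hx : IsIntegralCurveOn x w (Icc a b)) (hz : IsIntegralCurveOn z v (Icc a b))
    (h₀ : x a = z a) :
    ∀ t ∈ Icc a b, ‖x t - z t‖ ≤ gronwallBound 0 K B (t - a) := by
  simpa only [zero_add, dist_eq_norm] using dist_le_of_approx_trajectories_ODE hw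
    hx.continuousOn (fun t ht ↦ hasDerivWithinAt_Ici_of_isIntegralCurveOn_Icc hx ht)
    (fun t _ ↦ (dist_self _).le)
    hz.continuousOn (fun t ht ↦ hasDerivWithinAt_Ici_of_isIntegralCurveOn_Icc hz ht)
    (fun t _ ↦ (dist_comm _ _).trans_le ((dist_eq_norm _ _).trans_le (hwv t (z t))))
    (dist_le_zero.2 h₀)

theorem norm_sub_le_of_variational_ODE {v' w' : ℝ → E → E →L[ℝ] E} {K L : ℝ≥0}
    (hv' : ∀ t y, HasFDerivAt (v t) (v' t y) y) (hw' : ∀ t y, HasFDerivAt (w t) (w' t y) y)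
    (hv_lip : ∀ t, LipschitzWith L (v t)) (hw_lip : ∀ t, LipschitzWith K (w t))
    (hw'_lip : ∀ t, LipschitzWith K (w' t))
    (hwv : ∀ t y, ‖w t y - v t y‖ ≤ B) (hwv' : ∀ t y, ‖w' t y - v' t y‖ ≤ B)
    (hx : IsIntegralCurveOn x w (Icc a b)) (hz : IsIntegralCurveOn z v (Icc a b))
    (hξ : IsIntegralCurveOn ξ (fun t ↦ w' t (x t)) (Icc a b))
    (hη : IsIntegralCurveOn η (fun t ↦ v' t (z t)) (Icc a b))
    (hxz : x a = z a) (hξη : ξ a = η a) :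
    ∀ t ∈ Icc a b,
      ‖ξ t - η t‖ ≤ Real.exp (K * (t - a)) * gronwallBound 0 L (B * ‖η a‖) (t - a) := by
  have operators_close : ∀ t ∈ Ico a b,
      ‖w' t (x t) - v' t (z t)‖ ≤ B * Real.exp (K * (t - a)) := fun t ht ↦
    calc ‖w' t (x t) - v' t (z t)‖
        ≤ ‖w' t (x t) - w' t (z t)‖ + ‖w' t (z t) - v' t (z t)‖ :=
          norm_sub_le_norm_sub_add_norm_sub ..
      _ ≤ K * ‖x t - z t‖ + B :=
          add_le_add ((hw'_lip t).norm_sub_le _ _) (hwv' t (z t))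
      _ ≤ K * gronwallBound 0 K B (t - a) + B := by
          gcongr
          exact norm_sub_le_of_perturbed_ODE hw_lip hwv hx hz hxz t (Ico_subset_Icc_self ht)
      _ = B * Real.exp (K * (t - a)) := mul_gronwallBound_zero_add ..
  simpa only [hξη, sub_self, norm_zero, zero_add, add_sub_cancel_left] using
    norm_sub_le_of_linear_ODE
      (fun t _ ↦ (hw' t (x t)).le_of_lipschitz (hw_lip t))
      (fun t _ ↦ (hv' t (z t)).le_of_lipschitz (hv_lip t)) operators_close hξ hη

theorem exp_mul_gronwallBound_zero {A : ℝ} (hA : A ≠ 0) (B c t : ℝ) :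
    Real.exp (A * t) * gronwallBound 0 A (B * c) t =
      B / A * c * (1 - Real.exp (-(A * t))) * Real.exp (2 * A * t) := by
  have hsq : Real.exp (2 * A * t) = Real.exp (A * t) * Real.exp (A * t) := by
    rw [← Real.exp_add]
    ring_nf
  rw [gronwallBound_of_K_ne_0 hA, hsq, Real.exp_neg]
  field_simp
  ring

theorem stmt_1_general {A T : ℝ} {y₀ : E} (hv : ∀ t, Differentiable ℝ (v t))
    (hw : ∀ t, Differentiable ℝ (w t)) (hA : 0 < A)
    (hDv : ∀ t y, ‖fderiv ℝ (v t) y‖ ≤ A) (hDw : ∀ t y, ‖fderiv ℝ (w t) y‖ ≤ A)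
    (hDw_lip : ∀ t y y', ‖fderiv ℝ (w t) y - fderiv ℝ (w t) y'‖ ≤ A * ‖y - y'‖)
    (hwv : ∀ t y, ‖w t y - v t y‖ ≤ B)
    (hDwv : ∀ t y, ‖fderiv ℝ (w t) y - fderiv ℝ (v t) y‖ ≤ B)
    (hz : IsIntegralCurveOn z v (Icc 0 T)) (hx : IsIntegralCurveOn x w (Icc 0 T))
    (hzx : z 0 = x 0)
    (hη : IsIntegralCurveOn η (fun t ↦ fderiv ℝ (v t) (z t)) (Icc 0 T))
    (hξ : IsIntegralCurveOn ξ (fun t ↦ fderiv ℝ (w t) (x t)) (Icc 0 T))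
    (hη₀ : η 0 = y₀) (hξ₀ : ξ 0 = y₀) :
    ∀ t ∈ Icc 0 T, ‖ξ t - η t‖ ≤
      B / A * ‖y₀‖ * (1 - Real.exp (-(A * t))) * Real.exp (2 * A * t) := by
  intro t ht
  lift A to ℝ≥0 using hA.le
  have h := norm_sub_le_of_variational_ODE
    (fun t y ↦ (hv t y).hasFDerivAt) (fun t y ↦ (hw t y).hasFDerivAt)
    (fun t ↦ lipschitzWith_of_nnnorm_fderiv_le (hv t) (hDv t))
    (fun t ↦ lipschitzWith_of_nnnorm_fderiv_le (hw t) (hDw t))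
    (fun t ↦ LipschitzWith.of_dist_le_mul fun y y' ↦ by
      simpa only [dist_eq_norm] using hDw_lip t y y')
    hwv hDwv hx hz hξ hη hzx.symm (hξ₀.trans hη₀.symm) t ht
  rwa [sub_zero, hη₀, exp_mul_gronwallBound_zero hA.ne'] at h

end VariationalEquation

end

/-- First-order (second-variation) Gronwall estimate in Lemma 4.2 of the paper:
comparison of the solutions of the variational equations along solutions of a
perturbed and of an unperturbed ODE with the same initial data. -/
theorem stmt_1 (n : ℕ) (hn : 1 ≤ n) (A B : ℝ) (hA : 0 < A) (hB : 0 < B)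
    (F₀ Fₑ : EuclideanSpace ℝ (Fin n) → ℝ → EuclideanSpace ℝ (Fin n))
    (hF₀d : ∀ t : ℝ, ContDiff ℝ 1 fun z => F₀ z t)
    (hFₑd : ∀ t : ℝ, ContDiff ℝ 1 fun z => Fₑ z t)
    (hDF₀ : ∀ (z : EuclideanSpace ℝ (Fin n)) (t : ℝ),
      ‖fderiv ℝ (fun w => F₀ w t) z‖ ≤ A)
    (hDFₑ : ∀ (z : EuclideanSpace ℝ (Fin n)) (t : ℝ),
      ‖fderiv ℝ (fun w => Fₑ w t) z‖ ≤ A)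
    (hDFₑlip : ∀ (z z' : EuclideanSpace ℝ (Fin n)) (t : ℝ),
      ‖fderiv ℝ (fun w => Fₑ w t) z - fderiv ℝ (fun w => Fₑ w t) z'‖ ≤ A * ‖z - z'‖)
    (hFB : ∀ (z : EuclideanSpace ℝ (Fin n)) (t : ℝ), ‖Fₑ z t - F₀ z t‖ ≤ B)
    (hDFB : ∀ (z : EuclideanSpace ℝ (Fin n)) (t : ℝ),
      ‖fderiv ℝ (fun w => Fₑ w t) z - fderiv ℝ (fun w => F₀ w t) z‖ ≤ B)
    (T : ℝ) (hT : 0 < T)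
    (z zₑ δz δzₑ : ℝ → EuclideanSpace ℝ (Fin n)) (v : EuclideanSpace ℝ (Fin n))
    (hz : ∀ t ∈ Icc (0 : ℝ) T, HasDerivAt z (F₀ (z t) t) t)
    (hzₑ : ∀ t ∈ Icc (0 : ℝ) T, HasDerivAt zₑ (Fₑ (zₑ t) t) t)
    (h0 : z 0 = zₑ 0)
    (hδz : ∀ t ∈ Icc (0 : ℝ) T,
      HasDerivAt δz (fderiv ℝ (fun w => F₀ w t) (z t) (δz t)) t)
    (hδzₑ : ∀ t ∈ Icc (0 : ℝ) T,
      HasDerivAt δzₑ (fderiv ℝ (fun w => Fₑ w t) (zₑ t) (δzₑ t)) t)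
    (hδ0 : δz 0 = v) (hδₑ0 : δzₑ 0 = v) :
    ∀ t ∈ Icc (0 : ℝ) T,
      ‖δzₑ t - δz t‖ ≤
        B / A * ‖v‖ * (1 - Real.exp (-(A * t))) * Real.exp (2 * A * t) :=
  stmt_1_general (fun t ↦ (hF₀d t).differentiable one_ne_zero)
    (fun t ↦ (hFₑd t).differentiable one_ne_zero) hA (fun t z ↦ hDF₀ z t) (fun t z ↦ hDFₑ z t)
    (fun t z z' ↦ hDFₑlip z z' t) (fun t z ↦ hFB z t) (fun t z ↦ hDFB z t)
    (fun t ht ↦ (hz t ht).hasDerivWithinAt) (fun t ht ↦ (hzₑ t ht).hasDerivWithinAt) h0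
    (fun t ht ↦ (hδz t ht).hasDerivWithinAt) (fun t ht ↦ (hδzₑ t ht).hasDerivWithinAt) hδ0 hδₑ0
end

section
/- Let λ₀ < λ₁ be real numbers and let F : [λ₀,λ₁] × ℝ → ℝ satisfy: (i) for each λ the function F_λ = F(λ,·) is four times continuously differentiable and 2π-periodic; (ii) there is a constant C with |F(λ,x) − F(λ',x)| ≤ C|λ − λ'| for all x and all λ, λ' ∈ [λ₀,λ₁]; (iii) the supremum over λ ∈ [λ₀,λ₁], x ∈ ℝ and 0 ≤ j ≤ 4 of |∂ʲ_x F(λ,x)| is finite. Then for every ε̄ > 0 there exist ε ∈ (0, ε̄) and coefficients A₁, B₁, A₂, B₂ ∈ [1,2] such that, setting V(x) = ε(A₁ cos x + B₁ sin x + A₂ cos 2x + B₂ sin 2x), for every λ ∈ [λ₀,λ₁] and every x* ∈ ℝ at which F_λ − V attains its global minimum, one has (F_λ − V)''(x*) > 0; that is, every global minimum of F_λ − V is non-degenerate, simultaneously for all λ in the interval. -/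
open Set Real

/-!
At a degenerate local minimum the derivatives of orders one, two and three vanish: three equations
in the two unknowns `(lam, x)`, so for almost every coefficient vector there should be no solution.
Quantitatively, cut the parameters into intervals of length `h ^ 4` and the points into intervals
of length `h`. If two coefficient vectors `v` and `w` are both degenerate in the same cell, then
their perturbations differ there by a constant up to `O(h ^ 4)`, so the derivatives of orders
`1, 2, 3, 4` of the difference are `O(h ^ 3), O(h ^ 2), O(h), O(1)`. As the four-jet of a
trigonometric polynomial of degree two depends on its coefficients through a matrix of determinant
`72`, the degenerate vectors of one cell have volume `O(h ^ 6)`. A unit square consists of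
`h ^ (-5)` cells, so the degenerate vectors form a null set.
-/

open Filter Topology MeasureTheory
open scoped Nat NNReal Matrix

section Taylor

variable {f : ℝ → ℝ} {x : ℝ} {n : ℕ}

lemma taylorWithinEval_eq_taylorWithinEval_univ {s : Set ℝ} (hs : UniqueDiffOn ℝ s) (hx : x ∈ s)
    (hf : ContDiff ℝ n f) (y : ℝ) :
    taylorWithinEval f n s x y = taylorWithinEval f n univ x y := by
  simp only [taylor_within_apply, iteratedDerivWithin_univ]
  refine Finset.sum_congr rfl fun k hk => ?_
  have hkn : k ≤ n := Nat.lt_succ_iff.mp (Finset.mem_range.mp hk)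
  rw [iteratedDerivWithin_eq_iteratedDeriv hs (hf.of_le (mod_cast hkn)).contDiffAt hx]

lemma abs_sub_taylorWithinEval_univ_le {M : ℝ} (hf : ContDiff ℝ (n + 1) f)
    (hM : ∀ y, |iteratedDeriv (n + 1) f y| ≤ M) (x y : ℝ) :
    |f y - taylorWithinEval f n univ x y| ≤ M * |y - x| ^ (n + 1) / (n + 1)! := by
  rcases eq_or_ne x y with rfl | hxy
  · simp
  obtain ⟨z, -, hz⟩ := taylor_mean_remainder_lagrange_iteratedDeriv hxy hf.contDiffOn
  rw [taylorWithinEval_eq_taylorWithinEval_univ (uniqueDiffOn_uIcc hxy) left_mem_uIcc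
    (hf.of_le (mod_cast n.le_succ))] at hz
  rw [hz, abs_div, abs_mul, abs_pow, Nat.abs_cast]
  gcongr
  exact hM z

/-- `f` is flat to order `n` at `x`: its derivatives of orders `1, …, n` vanish there. A degenerate
local minimum is flat to order three. -/
def IsFlatAt (n : ℕ) (f : ℝ → ℝ) (x : ℝ) : Prop :=
  ∀ k ∈ Finset.Icc 1 n, iteratedDeriv k f x = 0

namespace IsFlatAt

lemma succ (hflat : IsFlatAt n f x) (hx : iteratedDeriv (n + 1) f x = 0) :
    IsFlatAt (n + 1) f x := by
  intro k hk
  rcases Nat.le_succ_iff.mp (Finset.mem_Icc.mp hk).2 with hkn | rfl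
  · exact hflat k (Finset.mem_Icc.mpr ⟨(Finset.mem_Icc.mp hk).1, hkn⟩)
  · exact hx

lemma taylorWithinEval_eq (hflat : IsFlatAt n f x) (y : ℝ) :
    taylorWithinEval f n univ x y = f x := by
  rw [taylor_within_apply, Finset.sum_range_succ', Finset.sum_eq_zero]
  · simp
  · intro k hk
    have hk' : k + 1 ∈ Finset.Icc 1 n := by
      simp only [Finset.mem_range, Finset.mem_Icc] at hk ⊢
      lia
    rw [iteratedDerivWithin_univ, hflat _ hk', smul_zero]

lemma abs_sub_le {M : ℝ} (hflat : IsFlatAt n f x) (hf : ContDiff ℝ (n + 1) f)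
    (hM : ∀ y, |iteratedDeriv (n + 1) f y| ≤ M) (y : ℝ) :
    |f y - f x| ≤ M * |y - x| ^ (n + 1) / (n + 1)! := by
  simpa only [hflat.taylorWithinEval_eq] using abs_sub_taylorWithinEval_univ_le hf hM x y

lemma tendsto_sub_div_pow (hflat : IsFlatAt n f x) (hf : ContDiff ℝ (n + 1) f) :
    Tendsto (fun y => (f y - f x) / (y - x) ^ (n + 1)) (𝓝[≠] x)
      (𝓝 (iteratedDeriv (n + 1) f x / (n + 1)!)) := by
  have hlim := (Real.taylor_tendsto (n := n + 1) convex_univ (mem_univ x)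
    (mod_cast hf.contDiffOn)).mono_left (nhdsWithin_mono x (subset_univ {x}ᶜ))
  have hlim_add := hlim.add_const (iteratedDeriv (n + 1) f x / (n + 1)!)
  rw [zero_add] at hlim_add
  refine hlim_add.congr' ?_
  filter_upwards [self_mem_nhdsWithin] with y hy
  have hyx : y - x ≠ 0 := sub_ne_zero.mpr hy
  rw [taylorWithinEval_succ, hflat.taylorWithinEval_eq, iteratedDerivWithin_univ,
    Nat.factorial_succ]
  simp only [smul_eq_mul]
  push_cast
  field_simp
  ring

lemma iteratedDeriv_nonneg_of_isLocalMin (hflat : IsFlatAt n f x) (hf : ContDiff ℝ (n + 1) f)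
    (hmin : IsLocalMin f x) : 0 ≤ iteratedDeriv (n + 1) f x := by
  have hlim := (hflat.tendsto_sub_div_pow hf).mono_left (nhdsGT_le_nhdsNE x)
  have hquot : 0 ≤ iteratedDeriv (n + 1) f x / (n + 1)! := by
    refine ge_of_tendsto hlim ?_
    filter_upwards [nhdsWithin_le_nhds hmin, self_mem_nhdsWithin] with y hy hxy
    exact div_nonneg (sub_nonneg.mpr hy) (pow_nonneg (sub_nonneg.mpr (le_of_lt hxy)) _)
  simpa using (le_div_iff₀ (by positivity)).mp hquot

lemma iteratedDeriv_eq_zero_of_isLocalMin_of_even (hflat : IsFlatAt n f x)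
    (hf : ContDiff ℝ (n + 1) f) (hmin : IsLocalMin f x) (hn : Even n) :
    iteratedDeriv (n + 1) f x = 0 := by
  refine le_antisymm ?_ (hflat.iteratedDeriv_nonneg_of_isLocalMin hf hmin)
  have hlim := (hflat.tendsto_sub_div_pow hf).mono_left (nhdsLT_le_nhdsNE x)
  have hquot : iteratedDeriv (n + 1) f x / (n + 1)! ≤ 0 := by
    refine le_of_tendsto hlim ?_
    filter_upwards [nhdsWithin_le_nhds hmin, self_mem_nhdsWithin] with y hy hxy
    exact div_nonpos_of_nonneg_of_nonpos (sub_nonneg.mpr hy)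
      (hn.add_one.pow_nonpos (sub_nonpos.mpr (le_of_lt hxy)))
  simpa using (div_le_iff₀ (by positivity)).mp hquot

end IsFlatAt

lemma isFlatAt_three_of_isLocalMin (hf : ContDiff ℝ 3 f) (hmin : IsLocalMin f x)
    (hdeg : iteratedDeriv 2 f x ≤ 0) : IsFlatAt 3 f x := by
  have hflat₀ : IsFlatAt 0 f x := by simp [IsFlatAt]
  have hflat₁ : IsFlatAt 1 f x := hflat₀.succ <| hflat₀.iteratedDeriv_eq_zero_of_isLocalMin_of_even
    (hf.of_le (by norm_num)) hmin Even.zero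
  have hflat₂ : IsFlatAt 2 f x := hflat₁.succ <| hdeg.antisymm <|
    hflat₁.iteratedDeriv_nonneg_of_isLocalMin (hf.of_le (by norm_num)) hmin
  exact hflat₂.succ <| hflat₂.iteratedDeriv_eq_zero_of_isLocalMin_of_even
    (hf.of_le (by norm_num)) hmin even_two

end Taylor

section Interpolation

/-- The coefficients are linear combinations of the values at `h`, `-h` and `2 * h`. -/
lemma abs_coeff_cubic_mul_pow_le {a b c h B : ℝ} (hh : 0 ≤ h)
    (hB : ∀ t, |t| ≤ 2 * h → |a * t + b * t ^ 2 + c * t ^ 3| ≤ B) :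
    |a| * h ^ 1 ≤ 2 * B ∧ |b| * h ^ 2 ≤ B ∧ |c| * h ^ 3 ≤ B := by
  have hpos := abs_le.mp (hB h (by rw [abs_of_nonneg hh]; linarith))
  have hneg := abs_le.mp (hB (-h) (by rw [abs_neg, abs_of_nonneg hh]; linarith))
  have hdouble := abs_le.mp (hB (2 * h) (abs_of_nonneg (by positivity)).le)
  ring_nf at hpos hneg hdouble
  have habs (u : ℝ) (k : ℕ) : |u| * h ^ k = |u * h ^ k| := by
    rw [abs_mul, abs_of_nonneg (pow_nonneg hh k)]
  rw [habs, habs, habs, abs_le, abs_le, abs_le]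
  refine ⟨⟨?_, ?_⟩, ⟨?_, ?_⟩, ⟨?_, ?_⟩⟩ <;> linarith

lemma abs_iteratedDeriv_mul_pow_le_of_abs_sub_le {g : ℝ → ℝ} {M h δ q y : ℝ} (hg : ContDiff ℝ 4 g)
    (hM : ∀ x, |iteratedDeriv 4 g x| ≤ M) (hh : 0 ≤ h)
    (hδ : ∀ t, |t| ≤ 2 * h → |g (y + t) - q| ≤ δ) {k : ℕ} (hk : k ∈ Finset.Icc 1 4) :
    |iteratedDeriv k g y| * h ^ k ≤ 12 * δ + 4 * M * h ^ 4 := by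
  have hM0 : 0 ≤ M := (abs_nonneg _).trans (hM 0)
  have hcenter : |g y - q| ≤ δ := by simpa using hδ 0 (by simpa using hh)
  have hcubic : ∀ t, |t| ≤ 2 * h →
      |iteratedDeriv 1 g y * t + iteratedDeriv 2 g y / 2 * t ^ 2 + iteratedDeriv 3 g y / 6 * t ^ 3|
        ≤ 2 * δ + 2 / 3 * M * h ^ 4 := by
    intro t ht
    have htaylor := abs_sub_taylorWithinEval_univ_le (n := 3) (by exact_mod_cast hg) hM y (y + t)
    have hpow : |t| ^ 4 ≤ 16 * h ^ 4 := by
      calc |t| ^ 4 ≤ (2 * h) ^ 4 := by gcongr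
        _ = 16 * h ^ 4 := by ring
    have hrem : M * |t| ^ 4 / 24 ≤ 2 / 3 * M * h ^ 4 := by
      linarith [mul_le_mul_of_nonneg_left hpow hM0]
    have hpoly : taylorWithinEval g 3 univ y (y + t) = g y + (iteratedDeriv 1 g y * t +
        iteratedDeriv 2 g y / 2 * t ^ 2 + iteratedDeriv 3 g y / 6 * t ^ 3) := by
      simp [taylorWithinEval_succ, iteratedDerivWithin_univ, Nat.factorial]
      ring
    rw [hpoly, add_sub_cancel_left, show ((3 + 1)! : ℝ) = 24 by norm_num [Nat.factorial]] at htaylor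
    have := abs_le.mp (hδ t ht)
    have := abs_le.mp hcenter
    have := abs_le.mp htaylor
    rw [abs_le]
    constructor <;> linarith
  obtain ⟨h₁, h₂, h₃⟩ := abs_coeff_cubic_mul_pow_le hh hcubic
  rw [abs_div, Nat.abs_ofNat] at h₂ h₃
  have hδ0 : 0 ≤ δ := (abs_nonneg _).trans hcenter
  have hMh : 0 ≤ M * h ^ 4 := by positivity
  obtain ⟨hk₁, hk₄⟩ := Finset.mem_Icc.mp hk
  interval_cases k
  · linarith
  · linarith
  · linarith
  · linarith [mul_le_mul_of_nonneg_right (hM y) (pow_nonneg hh 4)]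

end Interpolation

lemma volume_setOf_abs_mulVec_sub_le {ι : Type*} [Fintype ι] [DecidableEq ι] {A : Matrix ι ι ℝ}
    (hA : A.det ≠ 0) (m ρ : ι → ℝ) :
    volume {v | ∀ i, |(A *ᵥ v) i - m i| ≤ ρ i} =
      ENNReal.ofReal |A.det⁻¹| * ∏ i, ENNReal.ofReal (2 * ρ i) := by
  have hpre : {v | ∀ i, |(A *ᵥ v) i - m i| ≤ ρ i} = Matrix.toLin' A ⁻¹' Icc (m - ρ) (m + ρ) := by
    ext v
    simp only [mem_ofPred_eq, mem_preimage, Matrix.toLin'_apply, mem_Icc, Pi.le_def, Pi.sub_apply,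
      Pi.add_apply, ← forall_and, abs_le]
    refine forall_congr' fun i => and_congr ?_ ?_ <;> constructor <;> intro <;> linarith
  rw [hpre, Measure.addHaar_preimage_linearMap volume (by rwa [LinearMap.det_toLin']),
    LinearMap.det_toLin', Real.volume_Icc_pi]
  refine congrArg _ (Finset.prod_congr rfl fun i _ => congrArg _ ?_)
  simp only [Pi.add_apply, Pi.sub_apply]
  ring

section TrigPoly

/-- The trigonometric polynomial of degree two without constant term whose coefficients
`A₁, B₁, A₂, B₂` are the entries of `v`. It is the perturbation `V`, with the factor `ε` absorbed
into the coefficients. -/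
noncomputable def trigPoly (v : Fin 4 → ℝ) (x : ℝ) : ℝ :=
  v 0 * cos x + v 1 * sin x + v 2 * cos (2 * x) + v 3 * sin (2 * x)

/-- The matrix sending the coefficients of a `trigPoly` to its derivatives of orders `1, 2, 3, 4`
at `x`. -/
noncomputable def trigJet (x : ℝ) : Matrix (Fin 4) (Fin 4) ℝ :=
  !![-sin x, cos x, -2 * sin (2 * x), 2 * cos (2 * x);
     -cos x, -sin x, -4 * cos (2 * x), -4 * sin (2 * x);
     sin x, -cos x, 8 * sin (2 * x), -8 * cos (2 * x);
     cos x, sin x, 16 * cos (2 * x), 16 * sin (2 * x)]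

lemma trigPoly_sub (v w : Fin 4 → ℝ) : trigPoly (v - w) = trigPoly v - trigPoly w := by
  ext x
  simp only [trigPoly, Pi.sub_apply]
  ring

lemma contDiff_trigPoly (v : Fin 4 → ℝ) {n : WithTop ℕ∞} : ContDiff ℝ n (trigPoly v) := by
  unfold trigPoly
  fun_prop

lemma deriv_trigPoly (v : Fin 4 → ℝ) :
    deriv (trigPoly v) = trigPoly ![v 1, -v 0, 2 * v 3, -2 * v 2] := by
  ext x
  have hdouble : HasDerivAt (fun x : ℝ => 2 * x) 2 x := by
    simpa using (hasDerivAt_id x).const_mul 2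
  have hderiv := ((((hasDerivAt_cos x).const_mul (v 0)).add
    ((hasDerivAt_sin x).const_mul (v 1))).add (hdouble.cos.const_mul (v 2))).add
    (hdouble.sin.const_mul (v 3))
  refine hderiv.deriv.trans ?_
  simp [trigPoly]
  ring

lemma trigJet_mulVec (v : Fin 4 → ℝ) (x : ℝ) (j : Fin 4) :
    (trigJet x *ᵥ v) j = iteratedDeriv (j + 1) (trigPoly v) x := by
  fin_cases j <;>
  · simp [trigJet, Matrix.mulVec, dotProduct, Fin.sum_univ_succ, iteratedDeriv_succ',
      deriv_trigPoly, trigPoly]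
    ring

lemma det_trigJet (x : ℝ) : (trigJet x).det = 72 := by
  have hdet : (trigJet x).det =
      72 * ((sin x ^ 2 + cos x ^ 2) * (sin (2 * x) ^ 2 + cos (2 * x) ^ 2)) := by
    simp [trigJet, Matrix.det_succ_row_zero, Fin.sum_univ_succ, Fin.succAbove,
      -sin_sq_add_cos_sq]
    ring
  rw [hdet, sin_sq_add_cos_sq, sin_sq_add_cos_sq]
  norm_num

lemma abs_iteratedDeriv_four_trigPoly_le (v : Fin 4 → ℝ) (x : ℝ) :
    |iteratedDeriv 4 (trigPoly v) x| ≤ 34 * ‖v‖ := by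
  have hterm : ∀ (i : Fin 4) {s : ℝ}, |s| ≤ 1 → |v i * s| ≤ ‖v‖ := fun i s hs => by
    rw [abs_mul]
    exact (mul_le_of_le_one_right (abs_nonneg _) hs).trans (norm_le_pi_norm v i)
  have hjet : iteratedDeriv 4 (trigPoly v) x = v 0 * cos x + v 1 * sin x +
      16 * (v 2 * cos (2 * x)) + 16 * (v 3 * sin (2 * x)) := by
    refine (trigJet_mulVec v x 3).symm.trans ?_
    simp [trigJet, Matrix.mulVec, dotProduct, Fin.sum_univ_succ]
    ring
  have h₀ := abs_le.mp (hterm 0 (abs_cos_le_one x))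
  have h₁ := abs_le.mp (hterm 1 (abs_sin_le_one x))
  have h₂ := abs_le.mp (hterm 2 (abs_cos_le_one (2 * x)))
  have h₃ := abs_le.mp (hterm 3 (abs_sin_le_one (2 * x)))
  rw [hjet, abs_le]
  constructor <;> linarith

lemma abs_iteratedDeriv_four_sub_trigPoly_le {f : ℝ → ℝ} {K R : ℝ} {v : Fin 4 → ℝ} {x : ℝ}
    (hf : ContDiff ℝ 4 f) (hK : |iteratedDeriv 4 f x| ≤ K) (hv : ‖v‖ ≤ R) :
    |iteratedDeriv 4 (f - trigPoly v) x| ≤ K + 34 * R := by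
  rw [iteratedDeriv_sub hf.contDiffAt (contDiff_trigPoly v).contDiffAt]
  linarith [abs_sub (iteratedDeriv 4 f x) (iteratedDeriv 4 (trigPoly v) x),
    abs_iteratedDeriv_four_trigPoly_le v x]

end TrigPoly

section Cell

/-- The constant of the jet estimate `abs_trigJet_mulVec_sub_mul_pow_le`, for functions whose fourth
derivative is bounded by `K` and whose mutual distance is at most `C * h ^ 4`, and coefficient
vectors of norm at most `R`. The factors `12` and `4` come from
`abs_iteratedDeriv_mul_pow_le_of_abs_sub_le`; `5` is an upper bound for `(3 ^ 4 + 2 ^ 4) / 4!`. -/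
def jetConst (C K R : ℝ) : ℝ :=
  12 * (C + 5 * (K + 34 * R)) + 4 * (68 * R)

variable {f g : ℝ → ℝ} {C K R h x y : ℝ} {v w : Fin 4 → ℝ}

lemma abs_trigPoly_sub_sub_le (hf : ContDiff ℝ 4 f) (hg : ContDiff ℝ 4 g)
    (hKf : ∀ z, |iteratedDeriv 4 f z| ≤ K) (hKg : ∀ z, |iteratedDeriv 4 g z| ≤ K)
    (hfg : ∀ z, |f z - g z| ≤ C * h ^ 4) (hv : ‖v‖ ≤ R) (hw : ‖w‖ ≤ R) (hxy : |x - y| ≤ h)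
    (hfx : IsFlatAt 3 (f - trigPoly v) x) (hgy : IsFlatAt 3 (g - trigPoly w) y)
    {t : ℝ} (ht : |t| ≤ 2 * h) :
    |trigPoly (v - w) (y + t) - ((g - trigPoly w) y - (f - trigPoly v) x)| ≤
      (C + 5 * (K + 34 * R)) * h ^ 4 := by
  have hMf z := abs_iteratedDeriv_four_sub_trigPoly_le hf (hKf z) hv
  have hMg z := abs_iteratedDeriv_four_sub_trigPoly_le hg (hKg z) hw
  have hM0 : 0 ≤ K + 34 * R := (abs_nonneg _).trans (hMf 0)
  have hosc_f : |(f - trigPoly v) (y + t) - (f - trigPoly v) x| ≤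
      (K + 34 * R) * (3 * h) ^ 4 / 4! := by
    have hdist : |y + t - x| ≤ 3 * h := by
      rw [abs_le] at *
      constructor <;> linarith
    exact (hfx.abs_sub_le (mod_cast hf.sub (contDiff_trigPoly v)) hMf (y + t)).trans (by gcongr)
  have hosc_g : |(g - trigPoly w) (y + t) - (g - trigPoly w) y| ≤
      (K + 34 * R) * (2 * h) ^ 4 / 4! := by
    have hdist : |y + t - y| ≤ 2 * h := by rwa [add_sub_cancel_left]
    exact (hgy.abs_sub_le (mod_cast hg.sub (contDiff_trigPoly w)) hMg (y + t)).trans (by gcongr)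
  have hMh : 0 ≤ (K + 34 * R) * h ^ 4 := by positivity
  have hclose := abs_le.mp (hfg (y + t))
  have hosc_f := abs_le.mp hosc_f
  have hosc_g := abs_le.mp hosc_g
  simp only [trigPoly_sub, Pi.sub_apply, Nat.factorial, mul_pow] at hosc_f hosc_g ⊢
  push_cast at hosc_f hosc_g
  rw [abs_le]
  constructor <;> linarith

lemma abs_trigJet_mulVec_sub_mul_pow_le (hf : ContDiff ℝ 4 f) (hg : ContDiff ℝ 4 g)
    (hKf : ∀ z, |iteratedDeriv 4 f z| ≤ K) (hKg : ∀ z, |iteratedDeriv 4 g z| ≤ K)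
    (hfg : ∀ z, |f z - g z| ≤ C * h ^ 4) (hv : ‖v‖ ≤ R) (hw : ‖w‖ ≤ R) (hxy : |x - y| ≤ h)
    (hfx : IsFlatAt 3 (f - trigPoly v) x) (hgy : IsFlatAt 3 (g - trigPoly w) y) (j : Fin 4) :
    |(trigJet y *ᵥ v) j - (trigJet y *ᵥ w) j| * h ^ (j + 1 : ℕ) ≤ jetConst C K R * h ^ 4 := by
  have hM z : |iteratedDeriv 4 (trigPoly (v - w)) z| ≤ 68 * R := by
    linarith [abs_iteratedDeriv_four_trigPoly_le (v - w) z, norm_sub_le v w]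
  have hjet := abs_iteratedDeriv_mul_pow_le_of_abs_sub_le (contDiff_trigPoly (v - w)) hM
    ((abs_nonneg _).trans hxy)
    (fun t ht => abs_trigPoly_sub_sub_le hf hg hKf hKg hfg hv hw hxy hfx hgy ht)
    (Finset.mem_Icc.mpr ⟨Nat.succ_pos j, j.isLt⟩)
  rw [← trigJet_mulVec, Matrix.mulVec_sub, Pi.sub_apply] at hjet
  refine hjet.trans_eq ?_
  rw [jetConst]
  ring

/-- The degenerate coefficient vectors: those `v` for which some `f - trigPoly v` with `f ∈ 𝓕` is
flat to order three at some point of `X`. -/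
def flatCoeffs (𝓕 : Set (ℝ → ℝ)) (X : Set ℝ) : Set (Fin 4 → ℝ) :=
  {v | ∃ f ∈ 𝓕, ∃ x ∈ X, IsFlatAt 3 (f - trigPoly v) x}

lemma volume_flatCoeffs_inter_closedBall_le {𝓕 : Set (ℝ → ℝ)} {X : Set ℝ}
    (hsmooth : ∀ f ∈ 𝓕, ContDiff ℝ 4 f) (hK : ∀ f ∈ 𝓕, ∀ x, |iteratedDeriv 4 f x| ≤ K)
    (hh : 0 < h) (h𝓕 : ∀ f ∈ 𝓕, ∀ g ∈ 𝓕, ∀ x, |f x - g x| ≤ C * h ^ 4)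
    (hX : ∀ x ∈ X, ∀ y ∈ X, |x - y| ≤ h) :
    volume (flatCoeffs 𝓕 X ∩ Metric.closedBall 0 R) ≤
      ENNReal.ofReal (16 * jetConst C K R ^ 4 * h ^ 6) := by
  rcases (flatCoeffs 𝓕 X ∩ Metric.closedBall 0 R).eq_empty_or_nonempty with
    hempty | ⟨w, ⟨g, hg, y, hy, hgy⟩, hw⟩
  · simp [hempty]
  set r := jetConst C K R
  have hsub : flatCoeffs 𝓕 X ∩ Metric.closedBall 0 R ⊆
      {v | ∀ j, |(trigJet y *ᵥ v) j - (trigJet y *ᵥ w) j| ≤ r * h ^ (3 - j : ℕ)} := by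
    rintro v ⟨⟨f, hf, x, hx, hfx⟩, hv⟩ j
    refine le_of_mul_le_mul_right ?_ (pow_pos hh (j + 1))
    rw [mul_assoc, ← pow_add, show 3 - (j : ℕ) + (j + 1) = 4 by lia]
    exact abs_trigJet_mulVec_sub_mul_pow_le (hsmooth f hf) (hsmooth g hg) (hK f hf) (hK g hg)
      (h𝓕 f hf g hg) (mem_closedBall_zero_iff.mp hv) (mem_closedBall_zero_iff.mp hw)
      (hX x hx y hy) hfx hgy j
  have hr : 0 ≤ r := by
    have h0 := (abs_nonneg _).trans (hsub ⟨⟨g, hg, y, hy, hgy⟩, hw⟩ 3)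
    simpa using h0
  calc volume (flatCoeffs 𝓕 X ∩ Metric.closedBall 0 R)
      ≤ ENNReal.ofReal |(trigJet y).det⁻¹| *
          ∏ j : Fin 4, ENNReal.ofReal (2 * (r * h ^ (3 - j : ℕ))) :=
        (measure_mono hsub).trans_eq
          (volume_setOf_abs_mulVec_sub_le (by rw [det_trigJet]; norm_num) _ _)
    _ ≤ 1 * ∏ j : Fin 4, ENNReal.ofReal (2 * (r * h ^ (3 - j : ℕ))) := by
        gcongr
        rw [det_trigJet, ENNReal.ofReal_le_one]
        norm_num [abs_of_pos]
    _ = ENNReal.ofReal (16 * r ^ 4 * h ^ 6) := by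
        rw [one_mul, ← ENNReal.ofReal_prod_of_nonneg fun j _ => by positivity]
        congr 1
        simp [Fin.prod_univ_four]
        ring

end Cell

section NullSet

variable {F : ℝ → ℝ → ℝ} {S : Set ℝ} {C : ℝ≥0} {K : ℝ}

lemma exists_mem_Icc_add_div {n : ℕ} (hn : n ≠ 0) {a x : ℝ} (hx : x ∈ Ico a (a + 1)) :
    ∃ k : Fin n, x ∈ Icc (a + k / n) (a + (k + 1) / n) := by
  have hn' : (0 : ℝ) < n := by positivity
  have hnonneg : 0 ≤ (x - a) * n := mul_nonneg (sub_nonneg.mpr hx.1) hn'.le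
  have hlt : (x - a) * n < n := mul_lt_of_lt_one_left hn' (by linarith [hx.2])
  refine ⟨⟨⌊(x - a) * n⌋₊, (Nat.floor_lt hnonneg).mpr hlt⟩, ?_, ?_⟩
  · linarith [(div_le_iff₀ hn').mpr (Nat.floor_le hnonneg)]
  · linarith [(le_div_iff₀ hn').mpr (Nat.lt_floor_add_one ((x - a) * n)).le]

lemma abs_sub_le_one_div_of_mem_Icc {a k n x y : ℝ} (hx : x ∈ Icc (a + k / n) (a + (k + 1) / n))
    (hy : y ∈ Icc (a + k / n) (a + (k + 1) / n)) : |x - y| ≤ 1 / n := by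
  have hdist := Real.dist_le_of_mem_Icc hx hy
  rw [Real.dist_eq] at hdist
  exact hdist.trans_eq (by ring)

lemma volume_flatCoeffs_unit_square_le (hsmooth : ∀ lam ∈ S, ContDiff ℝ 4 (F lam))
    (hLip : ∀ x, LipschitzOnWith C (fun lam => F lam x) S)
    (hK : ∀ lam ∈ S, ∀ x, |iteratedDeriv 4 (F lam) x| ≤ K) (a b R : ℝ) {n : ℕ} (hn : n ≠ 0) :
    volume (flatCoeffs (F '' (S ∩ Ico a (a + 1))) (Ico b (b + 1)) ∩ Metric.closedBall 0 R) ≤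
      ENNReal.ofReal (16 * jetConst C K R ^ 4 / n) := by
  let cell (k : Fin (n ^ 4)) (l : Fin n) : Set (Fin 4 → ℝ) :=
    flatCoeffs (F '' (S ∩ Icc (a + k / (n ^ 4 : ℕ)) (a + (k + 1) / (n ^ 4 : ℕ))))
      (Icc (b + l / n) (b + (l + 1) / n)) ∩ Metric.closedBall 0 R
  have hcover : flatCoeffs (F '' (S ∩ Ico a (a + 1))) (Ico b (b + 1)) ∩ Metric.closedBall 0 R ⊆
      ⋃ k, ⋃ l, cell k l := by
    rintro v ⟨⟨_, ⟨lam, ⟨hlamS, hlam⟩, rfl⟩, x, hx, hflat⟩, hv⟩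
    obtain ⟨k, hk⟩ := exists_mem_Icc_add_div (pow_ne_zero 4 hn) hlam
    obtain ⟨l, hl⟩ := exists_mem_Icc_add_div hn hx
    exact mem_iUnion₂.mpr ⟨k, l, ⟨F lam, ⟨lam, ⟨hlamS, hk⟩, rfl⟩, x, hl, hflat⟩, hv⟩
  have hcell k l :
      volume (cell k l) ≤ ENNReal.ofReal (16 * jetConst C K R ^ 4 * (1 / n : ℝ) ^ 6) := by
    refine volume_flatCoeffs_inter_closedBall_le ?_ ?_ (by positivity) ?_
      fun x hx y hy => abs_sub_le_one_div_of_mem_Icc hx hy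
    · rintro _ ⟨lam, hlam, rfl⟩
      exact hsmooth lam hlam.1
    · rintro _ ⟨lam, hlam, rfl⟩
      exact hK lam hlam.1
    · rintro _ ⟨lam, hlam, rfl⟩ _ ⟨mu, hmu, rfl⟩ x
      calc |F lam x - F mu x| ≤ C * |lam - mu| := (hLip x).dist_le_mul lam hlam.1 mu hmu.1
        _ ≤ C * (1 / (n ^ 4 : ℕ)) := by
            gcongr
            exact abs_sub_le_one_div_of_mem_Icc hlam.2 hmu.2
        _ = C * (1 / n) ^ 4 := by push_cast; ring
  calc _ ≤ ∑ k, ∑ l, volume (cell k l) := (measure_mono hcover).trans <|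
          (measure_iUnion_fintype_le _ _).trans <|
            Finset.sum_le_sum fun k _ => measure_iUnion_fintype_le _ _
    _ ≤ ∑ _k : Fin (n ^ 4), ∑ _l : Fin n,
          ENNReal.ofReal (16 * jetConst C K R ^ 4 * (1 / n : ℝ) ^ 6) :=
        Finset.sum_le_sum fun k _ => Finset.sum_le_sum fun l _ => hcell k l
    _ = ENNReal.ofReal (16 * jetConst C K R ^ 4 / n) := by
        simp only [Finset.sum_const, Finset.card_univ, Fintype.card_fin,
          ← ENNReal.ofReal_nsmul]
        congr 1
        simp only [nsmul_eq_mul]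
        push_cast
        field_simp

lemma volume_flatCoeffs_univ_eq_zero (hsmooth : ∀ lam ∈ S, ContDiff ℝ 4 (F lam))
    (hLip : ∀ x, LipschitzOnWith C (fun lam => F lam x) S)
    (hK : ∀ lam ∈ S, ∀ x, |iteratedDeriv 4 (F lam) x| ≤ K) :
    volume (flatCoeffs (F '' S) univ) = 0 := by
  have hnull (a b R : ℝ) : volume
      (flatCoeffs (F '' (S ∩ Ico a (a + 1))) (Ico b (b + 1)) ∩ Metric.closedBall 0 R) = 0 := by
    have hlim :
        Tendsto (fun n : ℕ => ENNReal.ofReal (16 * jetConst C K R ^ 4 / n)) atTop (𝓝 0) := by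
      simpa using ENNReal.tendsto_ofReal
        (tendsto_const_div_atTop_nhds_zero_nat (16 * jetConst C K R ^ 4))
    refine nonpos_iff_eq_zero.mp (ge_of_tendsto hlim ?_)
    filter_upwards [eventually_ne_atTop 0] with n hn
    exact volume_flatCoeffs_unit_square_le hsmooth hLip hK a b R hn
  have hcover : flatCoeffs (F '' S) univ ⊆ ⋃ (a : ℤ) (b : ℤ) (R : ℕ),
      flatCoeffs (F '' (S ∩ Ico (a : ℝ) (a + 1))) (Ico (b : ℝ) (b + 1)) ∩
        Metric.closedBall 0 (R : ℝ) := by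
    rintro v ⟨_, ⟨lam, hlam, rfl⟩, x, -, hflat⟩
    simp only [mem_iUnion]
    obtain ⟨R, hR⟩ := exists_nat_ge ‖v‖
    exact ⟨⌊lam⌋, ⌊x⌋, R, ⟨F lam, ⟨lam, ⟨hlam, Int.floor_le lam, Int.lt_floor_add_one lam⟩, rfl⟩,
      x, ⟨Int.floor_le x, Int.lt_floor_add_one x⟩, hflat⟩, mem_closedBall_zero_iff.mpr hR⟩
  refine measure_mono_null hcover ?_
  simp only [measure_iUnion_null_iff]
  exact fun a b R => hnull a b R

theorem ae_forall_isLocalMin_sub_trigPoly_iteratedDeriv_two_pos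
    (hsmooth : ∀ lam ∈ S, ContDiff ℝ 4 (F lam))
    (hLip : ∀ x, LipschitzOnWith C (fun lam => F lam x) S)
    (hK : ∀ lam ∈ S, ∀ x, |iteratedDeriv 4 (F lam) x| ≤ K) :
    ∀ᵐ v : Fin 4 → ℝ, ∀ lam ∈ S, ∀ x, IsLocalMin (F lam - trigPoly v) x →
      0 < iteratedDeriv 2 (F lam - trigPoly v) x := by
  filter_upwards [measure_eq_zero_iff_ae_notMem.mp (volume_flatCoeffs_univ_eq_zero hsmooth hLip hK)]
    with v hv lam hlam x hmin
  by_contra! hdeg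
  have hcontDiff : ContDiff ℝ 3 (F lam - trigPoly v) :=
    ((hsmooth lam hlam).of_le (by norm_num)).sub (contDiff_trigPoly v)
  exact hv ⟨F lam, mem_image_of_mem F hlam, x, mem_univ x,
    isFlatAt_three_of_isLocalMin hcontDiff hmin hdeg⟩

theorem stmt_3_general (hsmooth : ∀ lam ∈ S, ContDiff ℝ 4 (F lam))
    (hLip : ∀ x, LipschitzOnWith C (fun lam => F lam x) S)
    (hK : ∀ lam ∈ S, ∀ x, |iteratedDeriv 4 (F lam) x| ≤ K) {ε : ℝ} (hε : 0 < ε) :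
    ∃ A₁ ∈ Icc (1 : ℝ) 2, ∃ B₁ ∈ Icc (1 : ℝ) 2, ∃ A₂ ∈ Icc (1 : ℝ) 2, ∃ B₂ ∈ Icc (1 : ℝ) 2,
      ∀ lam ∈ S, ∀ xstar : ℝ,
        IsLocalMin (fun x => F lam x - ε * (A₁ * cos x + B₁ * sin x +
          A₂ * cos (2 * x) + B₂ * sin (2 * x))) xstar →
        0 < iteratedDeriv 2 (fun x => F lam x - ε * (A₁ * cos x + B₁ * sin x +
          A₂ * cos (2 * x) + B₂ * sin (2 * x))) xstar := by
  obtain ⟨v, hv, hvbox⟩ := (Measure.dense_of_ae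
    (ae_forall_isLocalMin_sub_trigPoly_iteratedDeriv_two_pos hsmooth hLip hK)).exists_mem_open
      (isOpen_set_pi finite_univ fun _ _ => isOpen_Ioo)
      (univ_pi_nonempty_iff.mpr fun _ : Fin 4 => nonempty_Ioo.mpr (by linarith : ε < 2 * ε))
  have hcoeff (i : Fin 4) : v i / ε ∈ Icc (1 : ℝ) 2 := by
    obtain ⟨hlower, hupper⟩ := hvbox i (mem_univ i)
    exact ⟨(one_le_div hε).mpr hlower.le, (div_le_iff₀ hε).mpr hupper.le⟩
  refine ⟨_, hcoeff 0, _, hcoeff 1, _, hcoeff 2, _, hcoeff 3, fun lam hlam => ?_⟩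
  have hfun : (fun x => F lam x - ε * (v 0 / ε * cos x + v 1 / ε * sin x +
      v 2 / ε * cos (2 * x) + v 3 / ε * sin (2 * x))) = F lam - trigPoly v := by
    ext x
    simp only [Pi.sub_apply, trigPoly]
    field_simp
  rw [hfun]
  exact hv lam hlam

end NullSet

/-- Density part of Theorem B.1 of the paper: for a Lipschitz family of C⁴ 2π-periodic
functions, an arbitrarily small degree-two trigonometric perturbation makes every global
minimum non-degenerate simultaneously for all parameters. -/
theorem stmt_3 (lam₀ lam₁ : ℝ) (hlam : lam₀ < lam₁) (F : ℝ → ℝ → ℝ)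
    (hsmooth : ∀ lam ∈ Icc lam₀ lam₁, ContDiff ℝ 4 (F lam))
    (hper : ∀ lam ∈ Icc lam₀ lam₁, ∀ x : ℝ, F lam (x + 2 * π) = F lam x)
    (hLip : ∃ C : ℝ, ∀ x : ℝ, ∀ lam ∈ Icc lam₀ lam₁, ∀ lam' ∈ Icc lam₀ lam₁,
      |F lam x - F lam' x| ≤ C * |lam - lam'|)
    (hbnd : ∃ K : ℝ, ∀ lam ∈ Icc lam₀ lam₁, ∀ x : ℝ, ∀ j : ℕ, j ≤ 4 →
      |iteratedDeriv j (F lam) x| ≤ K) :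
    ∀ εbar : ℝ, 0 < εbar → ∃ ε : ℝ, 0 < ε ∧ ε < εbar ∧
      ∃ A₁ ∈ Icc (1:ℝ) 2, ∃ B₁ ∈ Icc (1:ℝ) 2, ∃ A₂ ∈ Icc (1:ℝ) 2, ∃ B₂ ∈ Icc (1:ℝ) 2,
        ∀ lam ∈ Icc lam₀ lam₁, ∀ xstar : ℝ,
          (∀ x : ℝ,
            F lam xstar - ε * (A₁ * cos xstar + B₁ * sin xstar +
              A₂ * cos (2 * xstar) + B₂ * sin (2 * xstar)) ≤
            F lam x - ε * (A₁ * cos x + B₁ * sin x +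
              A₂ * cos (2 * x) + B₂ * sin (2 * x))) →
          0 < iteratedDeriv 2
            (fun x => F lam x - ε * (A₁ * cos x + B₁ * sin x +
              A₂ * cos (2 * x) + B₂ * sin (2 * x))) xstar := by
  intro εbar hεbar
  obtain ⟨⟨C, hC⟩, K, hK⟩ := And.intro hLip hbnd
  obtain ⟨A₁, hA₁, B₁, hB₁, A₂, hA₂, B₂, hB₂, hmin⟩ := stmt_3_general hsmooth
    (fun x => .of_dist_le' (hC x)) (fun lam hlam x => hK lam hlam x 4 le_rfl) (half_pos hεbar)
  exact ⟨εbar / 2, half_pos hεbar, half_lt_self hεbar, A₁, hA₁, B₁, hB₁, A₂, hA₂, B₂, hB₂,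
    fun lam hlam xstar hx => hmin lam hlam xstar (.of_forall hx)⟩
end

section
/- For all real numbers a, b, c and every d > 0, the cubic polynomial p(x) = a·x + b·x² + c·x³ satisfies sup_{x ∈ [−d,d]} p(x) − inf_{x ∈ [−d,d]} p(x) ≥ max{ |a|·d/4, |b|·d², |c|·d³/2 }. -/
/-!
The oscillation of `p` is the diameter of its image, and so bounds every difference of two values.
Each of `(2 / 3) d a`, `d² b` and `d³ c / 2` is a combination of two such differences, with weights
whose absolute values sum to one:
`d² b = (p(d) - p(0)) / 2 + (p(-d) - p(0)) / 2`, while the odd part `p(x) - p(-x) = 2 x a + 2 x³ c`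
at `x = d` and `x = d / 2` determines `a` and `c`. The nodes `±d`, `±d / 2` are the extrema of the
Chebyshev polynomial `4 x³ - 3 x` when `d = 1`; this polynomial shows that the constants `2 / 3` and
`1 / 2` are optimal.
-/

open Set

section

variable {E : Type*} [NormedAddCommGroup E] [NormedSpace ℝ E]

theorem norm_smul_sub_add_smul_sub_le_diam_image {α : Type*} {f : α → E} {s : Set α}
    (hf : Bornology.IsBounded (f '' s)) {x₁ x₂ y₁ y₂ : α} (hx₁ : x₁ ∈ s) (hx₂ : x₂ ∈ s)
    (hy₁ : y₁ ∈ s) (hy₂ : y₂ ∈ s) (r t : ℝ) :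
    ‖r • (f x₁ - f x₂) + t • (f y₁ - f y₂)‖ ≤ (|r| + |t|) * Metric.diam (f '' s) := by
  have norm_sub_le {x y : α} (hx : x ∈ s) (hy : y ∈ s) : ‖f x - f y‖ ≤ Metric.diam (f '' s) :=
    dist_eq_norm (f x) (f y) ▸
      Metric.dist_le_diam_of_mem hf (mem_image_of_mem f hx) (mem_image_of_mem f hy)
  calc
    ‖r • (f x₁ - f x₂) + t • (f y₁ - f y₂)‖
      ≤ ‖r • (f x₁ - f x₂)‖ + ‖t • (f y₁ - f y₂)‖ := norm_add_le _ _
    _ = |r| * ‖f x₁ - f x₂‖ + |t| * ‖f y₁ - f y₂‖ := by simp only [norm_smul, Real.norm_eq_abs]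
    _ ≤ |r| * Metric.diam (f '' s) + |t| * Metric.diam (f '' s) := by
      gcongr
      exacts [norm_sub_le hx₁ hx₂, norm_sub_le hy₁ hy₂]
    _ = (|r| + |t|) * Metric.diam (f '' s) := by ring

/-- The cubic polynomial map `x ↦ a x + b x² + c x³` with coefficients in a real vector space and
no constant term, which would not affect the oscillation. -/
def cubicCurve (a b c : E) (x : ℝ) : E := x • a + x ^ 2 • b + x ^ 3 • c

namespace cubicCurve

variable (a b c : E) {d : ℝ}

theorem isBounded_image_Icc (x y : ℝ) : Bornology.IsBounded (cubicCurve a b c '' Icc x y) :=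
  (isCompact_Icc.image (by unfold cubicCurve; fun_prop)).isBounded

theorem norm_linear_coeff_le_diam (hd : 0 ≤ d) :
    2 / 3 * (‖a‖ * d) ≤ Metric.diam (cubicCurve a b c '' Icc (-d) d) := by
  let p := cubicCurve a b c
  calc
    2 / 3 * (‖a‖ * d) = ‖(2 / 3 * d) • a‖ := by
      rw [norm_smul, Real.norm_of_nonneg (by positivity)]; ring
    _ = ‖(-1 / 9 : ℝ) • (p d - p (-d)) + (8 / 9 : ℝ) • (p (d / 2) - p (-(d / 2)))‖ := by
      congr 1; simp only [p, cubicCurve]; module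
    _ ≤ (|-1 / 9| + |8 / 9|) * Metric.diam (p '' Icc (-d) d) := by
      apply norm_smul_sub_add_smul_sub_le_diam_image (isBounded_image_Icc a b c _ _) <;>
        exact ⟨by linarith, by linarith⟩
    _ = Metric.diam (p '' Icc (-d) d) := by norm_num [abs_div]

theorem norm_quadratic_coeff_le_diam (hd : 0 ≤ d) :
    ‖b‖ * d ^ 2 ≤ Metric.diam (cubicCurve a b c '' Icc (-d) d) := by
  let p := cubicCurve a b c
  calc
    ‖b‖ * d ^ 2 = ‖d ^ 2 • b‖ := by
      rw [norm_smul, Real.norm_of_nonneg (by positivity), mul_comm]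
    _ = ‖(1 / 2 : ℝ) • (p d - p 0) + (1 / 2 : ℝ) • (p (-d) - p 0)‖ := by
      congr 1; simp only [p, cubicCurve]; module
    _ ≤ (|1 / 2| + |1 / 2|) * Metric.diam (p '' Icc (-d) d) := by
      apply norm_smul_sub_add_smul_sub_le_diam_image (isBounded_image_Icc a b c _ _) <;>
        exact ⟨by linarith, by linarith⟩
    _ = Metric.diam (p '' Icc (-d) d) := by norm_num [abs_div]

theorem norm_cubic_coeff_le_diam (hd : 0 ≤ d) :
    ‖c‖ * d ^ 3 / 2 ≤ Metric.diam (cubicCurve a b c '' Icc (-d) d) := by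
  let p := cubicCurve a b c
  calc
    ‖c‖ * d ^ 3 / 2 = ‖(d ^ 3 / 2) • c‖ := by
      rw [norm_smul, Real.norm_of_nonneg (by positivity)]; ring
    _ = ‖(1 / 3 : ℝ) • (p d - p (-d)) + (-2 / 3 : ℝ) • (p (d / 2) - p (-(d / 2)))‖ := by
      congr 1; simp only [p, cubicCurve]; module
    _ ≤ (|1 / 3| + |-2 / 3|) * Metric.diam (p '' Icc (-d) d) := by
      apply norm_smul_sub_add_smul_sub_le_diam_image (isBounded_image_Icc a b c _ _) <;>
        exact ⟨by linarith, by linarith⟩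
    _ = Metric.diam (p '' Icc (-d) d) := by norm_num [abs_div]

end cubicCurve

theorem stmt_4_general (a b c : E) {d : ℝ} (hd : 0 ≤ d) :
    max (2 / 3 * (‖a‖ * d)) (max (‖b‖ * d ^ 2) (‖c‖ * d ^ 3 / 2)) ≤
      Metric.diam (cubicCurve a b c '' Icc (-d) d) :=
  max_le (cubicCurve.norm_linear_coeff_le_diam a b c hd)
    (max_le (cubicCurve.norm_quadratic_coeff_le_diam a b c hd)
      (cubicCurve.norm_cubic_coeff_le_diam a b c hd))

end

/-- Oscillation lower bound for a cubic polynomial p(x) = a·x + b·x² + c·x³ on the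
symmetric interval [−d, d] (the key quantitative step of Appendix B of the paper). -/
theorem stmt_4 (a b c d : ℝ) (hd : 0 < d) :
    max (|a| * d / 4) (max (|b| * d ^ 2) (|c| * d ^ 3 / 2)) ≤
      sSup ((fun x => a * x + b * x ^ 2 + c * x ^ 3) '' Set.Icc (-d) d) -
        sInf ((fun x => a * x + b * x ^ 2 + c * x ^ 3) '' Set.Icc (-d) d) := by
  have cubic_eq : (fun x => a * x + b * x ^ 2 + c * x ^ 3) = cubicCurve a b c := by
    funext x; simp only [cubicCurve, smul_eq_mul, mul_comm]
  rw [cubic_eq, ← Real.diam_eq (cubicCurve.isBounded_image_Icc a b c _ _)]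
  have weaken_constant : |a| * d / 4 ≤ 2 / 3 * (|a| * d) := by
    linarith [mul_nonneg (abs_nonneg a) hd.le]
  exact (max_le_max_right _ weaken_constant).trans (stmt_4_general a b c hd.le)
end

section
/- Let d > 0, M > 0 and x₀ ∈ ℝ, and let f : ℝ → ℝ be four times continuously differentiable on the interval [x₀−d, x₀+d] with sup_{|x−x₀|≤d} |f⁗(x)| < 24M. If f(x) − f(x₀) ≥ M·(x−x₀)⁴ for all x with |x−x₀| ≤ d, then f''(x₀) > 0. -/
open Set

/-!
The odd-order terms cancel in the symmetric second difference, so Taylor's theorem with Lagrange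
remainder gives
`f (x₀ + h) - 2 * f x₀ + f (x₀ - h) = f'' x₀ * h ^ 2 + f⁗ ξ / 12 * h ^ 4`.
The quartic lower bound makes the left-hand side at least `2 * M * h ^ 4`, while `f⁗ ξ < 24 * M`
makes the last term strictly smaller than that; the difference has to come from `f'' x₀ * h ^ 2`.
-/

section TaylorWithin

lemma iteratedDerivWithin_subset {𝕜 E : Type*} [NontriviallyNormedField 𝕜] [NormedAddCommGroup E]
    [NormedSpace 𝕜 E] {f : 𝕜 → E} {n : ℕ} {s t : Set 𝕜} {x : 𝕜} (hst : s ⊆ t)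
    (hs : UniqueDiffOn 𝕜 s) (ht : UniqueDiffOn 𝕜 t) (hf : ContDiffOn 𝕜 n f t) (hx : x ∈ s) :
    iteratedDerivWithin n f s x = iteratedDerivWithin n f t x := by
  rw [iteratedDerivWithin_eq_iteratedFDerivWithin, iteratedDerivWithin_eq_iteratedFDerivWithin,
    iteratedFDerivWithin_subset hst hs ht hf hx]

variable {E : Type*} [NormedAddCommGroup E] [NormedSpace ℝ E]

lemma taylorWithinEval_subset {f : ℝ → E} {n : ℕ} {s t : Set ℝ} {x₀ : ℝ} (hst : s ⊆ t)
    (hs : UniqueDiffOn ℝ s) (ht : UniqueDiffOn ℝ t) (hf : ContDiffOn ℝ n f t) (hx₀ : x₀ ∈ s)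
    (x : ℝ) : taylorWithinEval f n s x₀ x = taylorWithinEval f n t x₀ x := by
  rw [taylor_within_apply, taylor_within_apply]
  refine Finset.sum_congr rfl fun k hk ↦ ?_
  have hkn : k ≤ n := Finset.mem_range_succ_iff.mp hk
  rw [iteratedDerivWithin_subset hst hs ht (hf.of_le (mod_cast hkn)) hx₀]

lemma taylorWithinEval_three_add_sub (f : ℝ → E) (s : Set ℝ) (x₀ h : ℝ) :
    taylorWithinEval f 3 s x₀ (x₀ + h) + taylorWithinEval f 3 s x₀ (x₀ - h) =
      (2 : ℝ) • f x₀ + h ^ 2 • iteratedDerivWithin 2 f s x₀ := by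
  simp only [taylor_within_apply, Finset.sum_range_succ, Finset.sum_range_zero,
    iteratedDerivWithin_zero, Nat.factorial]
  module

end TaylorWithin

lemma uniqueDiffOn_of_convex_of_nontrivial {s : Set ℝ} (hs : Convex ℝ s) (hs' : s.Nontrivial) :
    UniqueDiffOn ℝ s :=
  uniqueDiffOn_convex hs (hs.nontrivial_iff_nonempty_interior.mp hs')

lemma exists_eq_midpoint_of_isPreconnected {X : Type*} [TopologicalSpace X] {g : X → ℝ} {s : Set X}
    {a b : X} (hs : IsPreconnected s) (hg : ContinuousOn g s) (ha : a ∈ s) (hb : b ∈ s) :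
    ∃ c ∈ s, g c = midpoint ℝ (g a) (g b) :=
  (hs.image g hg).convex.midpoint_mem (mem_image_of_mem g ha) (mem_image_of_mem g hb)

section Convex

variable {f : ℝ → ℝ} {s : Set ℝ} {x₀ : ℝ}

lemma taylor_mean_remainder_lagrange_of_convex {n : ℕ} {x : ℝ} (hs : Convex ℝ s) (hx₀ : x₀ ∈ s)
    (hx : x ∈ s) (hne : x₀ ≠ x) (hf : ContDiffOn ℝ (n + 1) f s) :
    ∃ ξ ∈ uIoo x₀ x, f x - taylorWithinEval f n s x₀ x =
      iteratedDerivWithin (n + 1) f s ξ * (x - x₀) ^ (n + 1) / (n + 1).factorial := by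
  have hsub : uIcc x₀ x ⊆ s := hs.ordConnected.uIcc_subset hx₀ hx
  have hu : UniqueDiffOn ℝ (uIcc x₀ x) := uniqueDiffOn_uIcc hne
  have hs' : UniqueDiffOn ℝ s := uniqueDiffOn_of_convex_of_nontrivial hs ⟨x₀, hx₀, x, hx, hne⟩
  have hdiff : DifferentiableOn ℝ (iteratedDerivWithin n f (uIcc x₀ x)) (uIcc x₀ x) :=
    (hf.mono hsub).differentiableOn_iteratedDerivWithin (mod_cast n.lt_succ_self) hu
  obtain ⟨ξ, hξ, hremainder⟩ := taylor_mean_remainder_lagrange hne (hf.of_succ.mono hsub)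
    (hdiff.mono uIoo_subset_uIcc_self)
  rw [taylorWithinEval_subset hsub hu hs' hf.of_succ left_mem_uIcc,
    iteratedDerivWithin_subset hsub hu hs' (mod_cast hf)
      (uIoo_subset_uIcc_self hξ)] at hremainder
  exact ⟨ξ, hξ, hremainder⟩

lemma exists_second_difference_eq {h : ℝ} (hs : Convex ℝ s) (hadd : x₀ + h ∈ s) (hsub : x₀ - h ∈ s)
    (hf : ContDiffOn ℝ 4 f s) :
    ∃ ξ ∈ s, f (x₀ + h) - 2 * f x₀ + f (x₀ - h) =
      iteratedDerivWithin 2 f s x₀ * h ^ 2 + iteratedDerivWithin 4 f s ξ / 12 * h ^ 4 := by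
  have hx₀ : x₀ ∈ s := by simpa using hs.midpoint_mem hsub hadd
  obtain rfl | hh := eq_or_ne h 0
  · exact ⟨x₀, hx₀, by ring_nf⟩
  have hf' : ContDiffOn ℝ ((3 : ℕ) + 1) f s := by norm_num [hf]
  have hne_add : x₀ ≠ x₀ + h := by simpa using hh
  have hne_sub : x₀ ≠ x₀ - h := by simpa [eq_sub_iff_add_eq] using hh
  have hs' : UniqueDiffOn ℝ s :=
    uniqueDiffOn_of_convex_of_nontrivial hs ⟨x₀, hx₀, x₀ + h, hadd, hne_add⟩
  obtain ⟨a, ha, htaylor_add⟩ :=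
    taylor_mean_remainder_lagrange_of_convex hs hx₀ hadd hne_add hf'
  obtain ⟨b, hb, htaylor_sub⟩ :=
    taylor_mean_remainder_lagrange_of_convex hs hx₀ hsub hne_sub hf'
  obtain ⟨ξ, hξ, hmid⟩ := exists_eq_midpoint_of_isPreconnected hs.isPreconnected
    (hf.continuousOn_iteratedDerivWithin (m := 4) le_rfl hs')
    (hs.ordConnected.uIcc_subset hx₀ hadd (uIoo_subset_uIcc_self ha))
    (hs.ordConnected.uIcc_subset hx₀ hsub (uIoo_subset_uIcc_self hb))
  have heven := taylorWithinEval_three_add_sub f s x₀ h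
  refine ⟨ξ, hξ, ?_⟩
  simp only [Nat.reduceAdd, Nat.factorial, smul_eq_mul] at htaylor_add htaylor_sub heven
  rw [hmid, midpoint_eq_smul_add, invOf_eq_inv, smul_eq_mul]
  linear_combination htaylor_add + htaylor_sub + heven

theorem stmt_7_general {h M : ℝ} (hs : Convex ℝ s) (hh : h ≠ 0) (hadd : x₀ + h ∈ s)
    (hsub : x₀ - h ∈ s) (hf : ContDiffOn ℝ 4 f s)
    (hf4 : ∀ x ∈ s, iteratedDerivWithin 4 f s x < 24 * M)
    (hquart : 2 * M * h ^ 4 ≤ f (x₀ + h) - 2 * f x₀ + f (x₀ - h)) :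
    0 < iteratedDerivWithin 2 f s x₀ := by
  obtain ⟨ξ, hξ, heq⟩ := exists_second_difference_eq hs hadd hsub hf
  have hremainder : iteratedDerivWithin 4 f s ξ / 12 * h ^ 4 < 2 * M * h ^ 4 := by
    have hcoeff : iteratedDerivWithin 4 f s ξ / 12 < 2 * M := by linarith [hf4 ξ hξ]
    exact mul_lt_mul_of_pos_right hcoeff (by positivity)
  have hpos : 0 < iteratedDerivWithin 2 f s x₀ * h ^ 2 := by linarith
  exact pos_of_mul_pos_left hpos (sq_nonneg h)

end Convex

/-- A quartic lower bound f(x) − f(x₀) ≥ M(x−x₀)⁴ on an interval, together with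
sup |f⁗| < 24M, forces f''(x₀) > 0 (used in Theorems B.1 and B.4 of the paper). -/
theorem stmt_7 (d M x₀ : ℝ) (hd : 0 < d) (hM : 0 < M) (f : ℝ → ℝ)
    (hf : ContDiffOn ℝ 4 f (Icc (x₀ - d) (x₀ + d)))
    (hf4 : ∃ K : ℝ, K < 24 * M ∧ ∀ x ∈ Icc (x₀ - d) (x₀ + d),
      |iteratedDerivWithin 4 f (Icc (x₀ - d) (x₀ + d)) x| ≤ K)
    (hquart : ∀ x ∈ Icc (x₀ - d) (x₀ + d), M * (x - x₀) ^ 4 ≤ f x - f x₀) :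
    0 < iteratedDerivWithin 2 f (Icc (x₀ - d) (x₀ + d)) x₀ := by
  obtain ⟨K, hKM, hK⟩ := hf4
  have hadd : x₀ + d ∈ Icc (x₀ - d) (x₀ + d) := right_mem_Icc.mpr (by linarith)
  have hsub : x₀ - d ∈ Icc (x₀ - d) (x₀ + d) := left_mem_Icc.mpr (by linarith)
  exact stmt_7_general (convex_Icc _ _) hd.ne' hadd hsub hf
    (fun x hx ↦ (le_of_abs_le (hK x hx)).trans_lt hKM)
    (by linear_combination hquart _ hadd + hquart _ hsub)
end

section
/- Let n ≥ 1 and let A be a real symmetric positive definite n×n matrix. Then the set of real symmetric positive definite n×n matrices C for which the polynomial λ ↦ det(λ²·A − C) has 2n pairwise distinct roots is open and dense in the set of real symmetric positive definite n×n matrices, endowed with the topology induced from the space of all n×n real matrices. -/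
open scoped Classical

/-- The polynomial λ ↦ det(λ²·A − C), as an element of ℝ[X]. -/
noncomputable def detPencil {n : ℕ} (A C : Matrix (Fin n) (Fin n) ℝ) : Polynomial ℝ :=
  ((Polynomial.X ^ 2 : Polynomial ℝ) • A.map Polynomial.C - C.map Polynomial.C).det

/-!
For invertible `A` we have `det (λ² A - C) = det A * χ (λ²)`, where `χ` is the characteristic
polynomial of `A⁻¹ C`, so for invertible `C` the roots are distinct exactly when the discriminant
of `A⁻¹ C` does not vanish. The discriminant is continuous, which gives openness. It is moreover a
polynomial along every line, so on a convex set its nonvanishing locus is dense as soon as it is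
nonempty. A spectral decomposition `A = U diag(λᵢ) U*` provides a point of this locus, namely
`U diag(λᵢ μᵢ) U*` with distinct `μᵢ` having the signs of the `λᵢ`.
-/

open Polynomial

theorem separable_expand_iff {F : Type*} [Field F] {k : ℕ} (hk : (k : F) ≠ 0) (hk1 : k ≠ 1)
    {p : F[X]} : (expand F k p).Separable ↔ p.Separable ∧ p.coeff 0 ≠ 0 := by
  have hk0 : k ≠ 0 := by rintro rfl; simp at hk
  have hunit : IsUnit (k : F[X]) := by
    rw [← C_eq_natCast]
    exact isUnit_C.2 hk.isUnit
  have hX : IsCoprime (expand F k p) X ↔ p.coeff 0 ≠ 0 := by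
    rw [isCoprime_comm, irreducible_X.coprime_iff_not_dvd, X_dvd_iff, coeff_zero_eq_eval_zero,
      expand_eval, zero_pow hk0, ← coeff_zero_eq_eval_zero]
  rw [Separable, derivative_expand, IsCoprime.mul_right_iff, isCoprime_expand hk0,
    isCoprime_mul_unit_left_right hunit, IsCoprime.pow_right_iff (by omega), hX, Separable]

theorem card_toFinset_aroots_eq_natDegree_iff {F K : Type*} [Field F] [Field K] [IsAlgClosed K]
    [Algebra F K] [DecidableEq K] {p : F[X]} (hp : p ≠ 0) :
    (p.aroots K).toFinset.card = p.natDegree ↔ p.Separable := by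
  have hsplits : (p.map (algebraMap F K)).Splits := IsAlgClosed.splits _
  rw [← nodup_aroots_iff_of_splits hp hsplits, ← Multiset.toFinset_card_eq_card_iff_nodup,
    ← natDegree_map (algebraMap F K), hsplits.natDegree_eq_card_roots]

section Discriminant

variable {R S : Type*} [CommRing R] [CommRing S]

theorem isUnit_discr_iff_separable {f : R[X]} (hf : f.Monic) : IsUnit f.discr ↔ f.Separable := by
  nontriviality R
  obtain hdeg | hdeg := eq_or_ne f.natDegree 0
  · simp [eq_one_of_monic_natDegree_zero hf hdeg, ← C_1, discr_C, -map_one, separable_C]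
  have hres :
      f.resultant f.derivative = f.resultant f.derivative f.natDegree (f.natDegree - 1) := by
    obtain ⟨k, hk⟩ := Nat.exists_eq_add_of_le (natDegree_derivative_le f)
    rw [hk, resultant_add_right_deg _ _ _ _ _ le_rfl, coeff_natDegree, hf.leadingCoeff, one_pow,
      one_mul]
  rw [Separable, ← isUnit_resultant_iff_isCoprime hf, hres,
    resultant_deriv (natDegree_pos_iff_degree_pos.1 (Nat.pos_of_ne_zero hdeg)), hf.leadingCoeff,
    mul_one, IsUnit.mul_iff, and_iff_right (isUnit_one.neg.pow _)]

theorem discr_map_of_monic (φ : R →+* S) {f : R[X]} (hf : f.Monic) :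
    (f.map φ).discr = φ f.discr := by
  nontriviality S
  have hnat : (f.map φ).natDegree = f.natDegree := hf.natDegree_map φ
  obtain hdeg | hdeg := eq_or_ne f.natDegree 0
  · rw [eq_one_of_monic_natDegree_zero hf hdeg, Polynomial.map_one, ← C_1, ← C_1, discr_C, discr_C,
      map_one]
  have hpos : 0 < f.degree := natDegree_pos_iff_degree_pos.1 (Nat.pos_of_ne_zero hdeg)
  have hmap := resultant_deriv (f := f.map φ) (by rwa [hf.degree_map])
  rw [derivative_map, resultant_map_map, hnat, resultant_deriv hpos, hf.leadingCoeff,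
    (hf.map φ).leadingCoeff] at hmap
  simpa only [mul_one, map_mul, map_pow, map_neg, map_one,
    (isUnit_one.neg.pow _).mul_right_inj] using hmap.symm

variable {ι : Type*} [Fintype ι] [DecidableEq ι]

theorem discr_matrix_map (φ : R →+* S) (M : Matrix ι ι R) : (M.map φ).discr = φ M.discr := by
  rw [Matrix.discr, Matrix.charpoly_map, discr_map_of_monic φ M.charpoly_monic, Matrix.discr]

theorem continuous_matrix_discr [TopologicalSpace R] [IsTopologicalRing R] :
    Continuous (Matrix.discr : Matrix ι ι R → R) := by
  have heval (M : Matrix ι ι R) :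
      M.discr = MvPolynomial.eval (fun p ↦ M p.1 p.2) (Matrix.mvPolynomialX ι ι R).discr := by
    rw [← discr_matrix_map]
    congr
    ext i j
    simp
  simp_rw [funext heval]
  exact (MvPolynomial.continuous_eval _).comp
    (continuous_pi fun p ↦ continuous_id.matrix_elem p.1 p.2)

theorem exists_polynomial_eval_eq_discr_mul_lineMap (B M N : Matrix ι ι R) :
    ∃ p : R[X], ∀ t, p.eval t = (B * AffineMap.lineMap M N t).discr := by
  refine ⟨(B.map C * AffineMap.lineMap (M.map C) (N.map C) (X : R[X])).discr, fun t ↦ ?_⟩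
  rw [← coe_evalRingHom t, ← discr_matrix_map, Matrix.map_mul]
  congr 2 <;> ext i j <;> simp [AffineMap.lineMap_apply]

end Discriminant

theorem dense_ne_zero_of_polynomial_on_lines {E : Type*} [AddCommGroup E] [Module ℝ E]
    [TopologicalSpace E] [IsTopologicalAddGroup E] [ContinuousSMul ℝ E]
    {s : Set E} (hs : Convex ℝ s) {f : E → ℝ}
    (hf : ∀ x y, ∃ p : ℝ[X], ∀ t, p.eval t = f (AffineMap.lineMap x y t))
    (hne : ∃ y ∈ s, f y ≠ 0) : Dense {x : s | f x ≠ 0} := by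
  obtain ⟨y, hys, hy⟩ := hne
  intro x
  obtain ⟨p, hp⟩ := hf x y
  have hp0 : p ≠ 0 := by
    rintro rfl
    exact hy (by simpa using (hp 1).symm)
  have hroots : ∀ᶠ t in nhdsWithin (0 : ℝ) (Set.Ioi 0), ¬ p.IsRoot t :=
    (nhdsGT_le_nhdsNE 0).trans (nhdsNE_le_cofinite 0)
      (finite_setOfPred_isRoot hp0).compl_mem_cofinite
  have hunit : ∀ᶠ t in nhdsWithin (0 : ℝ) (Set.Ioi 0), t ∈ Set.Icc (0 : ℝ) 1 :=
    Icc_mem_nhdsGT one_pos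
  have hlim : Filter.Tendsto (AffineMap.lineMap x.1 y) (nhdsWithin (0 : ℝ) (Set.Ioi 0))
      (nhds x.1) := by
    have hcont : Continuous (AffineMap.lineMap x.1 y : ℝ → E) := AffineMap.lineMap_continuous
    simpa using (hcont.tendsto 0).mono_left nhdsWithin_le_nhds
  rw [closure_subtype]
  refine mem_closure_of_tendsto hlim ?_
  filter_upwards [hroots, hunit] with t ht ht01
  exact ⟨⟨_, hs.lineMap_mem x.2 hys ht01⟩, fun h ↦ ht ((hp t).trans h), rfl⟩

theorem det_smul_map_C_sub_map_C {ι R : Type*} [Fintype ι] [DecidableEq ι] [CommRing R]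
    {A : Matrix ι ι R} (hA : IsUnit A.det) (M : Matrix ι ι R) :
    ((X : R[X]) • A.map C - M.map C).det = C A.det * (A⁻¹ * M).charpoly := by
  have hfactor : (X : R[X]) • A.map C - M.map C = A.map C * (A⁻¹ * M).charmatrix := by
    rw [Matrix.charmatrix, Matrix.mul_sub, RingHom.mapMatrix_apply, ← Matrix.map_mul,
      Matrix.mul_nonsing_inv_cancel_left A M hA]
    simp [← Matrix.smul_eq_mul_diagonal]
  rw [hfactor, Matrix.det_mul, Matrix.charpoly, RingHom.map_det, RingHom.mapMatrix_apply]

section Pencil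

variable {n : ℕ} {A M : Matrix (Fin n) (Fin n) ℝ}

theorem detPencil_eq_C_mul_expand (hA : A.det ≠ 0) :
    detPencil A M = C A.det * expand ℝ 2 (A⁻¹ * M).charpoly := by
  rw [← expand_C 2 A.det, ← map_mul, ← det_smul_map_C_sub_map_C hA.isUnit, AlgHom.map_det,
    detPencil]
  congr 1
  ext1 i j
  simp

theorem natDegree_detPencil (hA : A.det ≠ 0) : (detPencil A M).natDegree = 2 * n := by
  rw [detPencil_eq_C_mul_expand hA, natDegree_C_mul hA, natDegree_expand,
    Matrix.charpoly_natDegree_eq_dim, Fintype.card_fin, mul_comm]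

theorem separable_detPencil_iff (hA : A.det ≠ 0) (hM : M.det ≠ 0) :
    (detPencil A M).Separable ↔ (A⁻¹ * M).discr ≠ 0 := by
  have hcoeff : (A⁻¹ * M).charpoly.coeff 0 ≠ 0 := by
    have hdet : (A⁻¹ * M).det ≠ 0 := by simp [hA, hM]
    intro h
    simp [Matrix.det_eq_sign_charpoly_coeff, h] at hdet
  have hassoc := associated_unit_mul_left (expand ℝ 2 (A⁻¹ * M).charpoly) _ (isUnit_C.2 hA.isUnit)
  rw [detPencil_eq_C_mul_expand hA, hassoc.separable_iff,
    separable_expand_iff (by norm_num) (by norm_num), and_iff_left hcoeff,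
    ← isUnit_discr_iff_separable (Matrix.charpoly_monic _), isUnit_iff_ne_zero, Matrix.discr]

theorem card_roots_detPencil_eq_iff (hA : A.det ≠ 0) (hM : M.det ≠ 0) :
    ((detPencil A M).map (algebraMap ℝ ℂ)).roots.toFinset.card = 2 * n ↔ (A⁻¹ * M).discr ≠ 0 := by
  have hne : detPencil A M ≠ 0 := by
    rw [detPencil_eq_C_mul_expand hA]
    exact mul_ne_zero (C_ne_zero.2 hA)
      ((expand_ne_zero two_pos).2 (Matrix.charpoly_monic _).ne_zero)
  rw [← separable_detPencil_iff hA hM, ← natDegree_detPencil hA (M := M)]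
  exact card_toFinset_aroots_eq_natDegree_iff hne

end Pencil

theorem convex_setOf_posDef {ι R : Type*} [Ring R] [PartialOrder R] [AddLeftMono R]
    [StarRing R] [Algebra ℝ R] [StarModule ℝ R] [PosSMulStrictMono ℝ R] :
    Convex ℝ {M : Matrix ι ι R | M.PosDef} :=
  convex_iff_forall_pos.2 fun _ hM _ hN _ _ ha hb _ ↦ (hM.smul ha).add (hN.smul hb)

theorem exists_injective_forall_mul_pos {ι : Type*} [Countable ι] {a : ι → ℝ}
    (ha : ∀ i, a i ≠ 0) :
    ∃ μ : ι → ℝ, Function.Injective μ ∧ ∀ i, 0 < a i * μ i := by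
  obtain ⟨k, hk⟩ := Countable.exists_injective_nat ι
  have habs (i : ι) : |a i * ((k i + 1) / |a i|)| = k i + 1 := by
    rw [abs_mul, abs_div, abs_abs, mul_div_cancel₀ _ (abs_ne_zero.2 (ha i))]
    exact abs_of_pos (by positivity)
  refine ⟨fun i ↦ a i * ((k i + 1) / |a i|), fun i j hij ↦ hk ?_, fun i ↦ ?_⟩
  · simpa only [habs, add_left_inj, Nat.cast_inj] using congrArg abs hij
  · rw [← mul_assoc]
    exact mul_pos (mul_self_pos.2 (ha i)) (div_pos (by positivity) (abs_pos.2 (ha i)))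

open scoped ComplexOrder in
theorem exists_posDef_separable_charpoly_inv_mul {ι 𝕜 : Type*} [Fintype ι]
    [DecidableEq ι] [RCLike 𝕜] {A : Matrix ι ι 𝕜} (hA : A.IsHermitian) (hdet : A.det ≠ 0) :
    ∃ D : Matrix ι ι 𝕜, D.PosDef ∧ (A⁻¹ * D).charpoly.Separable := by
  have heig (i : ι) : hA.eigenvalues i ≠ 0 := by
    rw [hA.det_eq_prod_eigenvalues, Finset.prod_ne_zero_iff] at hdet
    exact RCLike.ofReal_ne_zero.1 (hdet i (Finset.mem_univ i))
  obtain ⟨μ, hμ, hpos⟩ := exists_injective_forall_mul_pos heig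
  let U := Unitary.conjStarAlgAut 𝕜 (Matrix ι ι 𝕜) hA.eigenvectorUnitary
  have hmul : A * U (Matrix.diagonal (RCLike.ofReal ∘ μ)) =
      U (Matrix.diagonal fun i ↦ ((hA.eigenvalues i * μ i : ℝ) : 𝕜)) := by
    conv_lhs => rw [hA.spectral_theorem]
    rw [← map_mul, Matrix.diagonal_mul_diagonal]
    simp only [U, Function.comp_apply, RCLike.ofReal_mul]
  refine ⟨A * U (Matrix.diagonal (RCLike.ofReal ∘ μ)), ?_, ?_⟩
  · rw [hmul, Unitary.conjStarAlgAut_apply,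
      Matrix.IsUnit.posDef_star_right_conjugate_iff Unitary.isUnit_coe,
      Matrix.posDef_diagonal_iff]
    exact fun i ↦ RCLike.ofReal_pos.2 (hpos i)
  · rw [Matrix.nonsing_inv_mul_cancel_left _ _ hdet.isUnit, Unitary.conjStarAlgAut_apply,
      Matrix.charpoly_mul_comm, ← mul_assoc, Unitary.coe_star_mul_self, one_mul,
      Matrix.charpoly_diagonal, separable_prod_X_sub_C_iff]
    exact RCLike.ofReal_injective.comp hμ

theorem stmt_9_general (n : ℕ) (A : Matrix (Fin n) (Fin n) ℝ) (hA : A.IsHermitian)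
    (hdet : A.det ≠ 0) :
    IsOpen {Cm : {M : Matrix (Fin n) (Fin n) ℝ // M.PosDef} |
        (((detPencil A Cm.1).map (algebraMap ℝ ℂ)).roots.toFinset.card = 2 * n)} ∧
    Dense {Cm : {M : Matrix (Fin n) (Fin n) ℝ // M.PosDef} |
        (((detPencil A Cm.1).map (algebraMap ℝ ℂ)).roots.toFinset.card = 2 * n)} := by
  have hgood (Cm : {M : Matrix (Fin n) (Fin n) ℝ // M.PosDef}) :=
    card_roots_detPencil_eq_iff hdet Cm.2.det_pos.ne'
  simp_rw [hgood]
  constructor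
  · exact isOpen_ne.preimage
      (continuous_matrix_discr.comp (continuous_const.matrix_mul continuous_subtype_val))
  · obtain ⟨D, hD, hsep⟩ := exists_posDef_separable_charpoly_inv_mul hA hdet
    have hne : (A⁻¹ * D).discr ≠ 0 :=
      ((isUnit_discr_iff_separable (Matrix.charpoly_monic _)).2 hsep).ne_zero
    have hconv : Convex ℝ {M : Matrix (Fin n) (Fin n) ℝ | M.PosDef} := convex_setOf_posDef
    exact dense_ne_zero_of_polynomial_on_lines (f := fun M ↦ (A⁻¹ * M).discr) hconv
      (exists_polynomial_eval_eq_discr_mul_lineMap A⁻¹) ⟨D, hD, hne⟩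

/-- Genericity claim from the proof of Proposition 3.2 of the paper: for a fixed real
symmetric positive definite A, the set of real symmetric positive definite matrices C
such that λ ↦ det(λ²A − C) has 2n pairwise distinct (complex) roots is open and dense
in the set of positive definite matrices with the induced topology. -/
theorem stmt_9 (n : ℕ) (hn : 1 ≤ n) (A : Matrix (Fin n) (Fin n) ℝ) (hA : A.PosDef) :
    IsOpen {Cm : {M : Matrix (Fin n) (Fin n) ℝ // M.PosDef} |
        (((detPencil A Cm.1).map (algebraMap ℝ ℂ)).roots.toFinset.card = 2 * n)} ∧
    Dense {Cm : {M : Matrix (Fin n) (Fin n) ℝ // M.PosDef} |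
        (((detPencil A Cm.1).map (algebraMap ℝ ℂ)).roots.toFinset.card = 2 * n)} :=
  stmt_9_general n A hA.isHermitian hA.det_pos.ne'
end

section
/- Let n ≥ 1, let P : ℝⁿ → ℝ be continuously differentiable and ℤⁿ-periodic (P(x + k) = P(x) for all x ∈ ℝⁿ and k ∈ ℤⁿ), and let ω ∈ ℝⁿ and T > 0 satisfy T·ω ∈ ℤⁿ. Define the time average [P](x) = (1/T)∫₀ᵀ P(x + t·ω) dt and the generating function W(x) = −(1/T)∫₀ᵀ t·P(x + t·ω) dt. Then W is differentiable and ⟨ω, ∇W(x)⟩ = −P(x) + [P](x) for every x ∈ ℝⁿ. -/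
/-!
Differentiating `W x = -(1 / T) ∫₀ᵀ t P(x + t ω) dt` under the integral sign in the direction `ω`
turns `P(x + t ω)` into its `t`-derivative. Integrating by parts against the weight `t` then leaves
the boundary term `-P(x + T ω)` and the time average of `P`. The resonance condition makes `T ω` a
period of `P`, so the boundary term is `-P x`.
-/

open Filter Function MeasureTheory Topology

theorem periodic_of_forall_eq_intCast {ι R β : Type*} [Add R] [IntCast R] {f : (ι → R) → β}
    (hf : ∀ k : ι → ℤ, Periodic f fun i => (k i : R)) {v : ι → R}
    (hv : ∀ i, ∃ k : ℤ, v i = k) : Periodic f v := by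
  choose k hk using hv
  rw [funext hk]
  exact hf k

theorem exists_eventually_forall_norm_le_of_isCompact {X Y G : Type*} [TopologicalSpace X]
    [TopologicalSpace Y] [SeminormedAddGroup G] {f : X → Y → G} {K : Set Y} (hK : IsCompact K)
    (hf : Continuous (uncurry f)) (x₀ : X) :
    ∃ C, ∀ᶠ x in 𝓝 x₀, ∀ y ∈ K, ‖f x y‖ ≤ C := by
  obtain ⟨C, hC⟩ := hK.exists_bound_of_continuousOn (f := f x₀) (by fun_prop)
  refine ⟨C + 1, hK.eventually_forall_of_forall_eventually fun y hy => ?_⟩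
  have hlt : ‖uncurry f (x₀, y)‖ < C + 1 := (hC y hy).trans_lt (lt_add_one C)
  exact (hf.norm.continuousAt.eventually_lt_const hlt).mono fun _ => le_of_lt

theorem hasFDerivAt_intervalIntegral_of_continuous_fderiv {𝕜 H G : Type*} [RCLike 𝕜]
    [NormedAddCommGroup H] [NormedSpace 𝕜 H] [NormedAddCommGroup G] [NormedSpace ℝ G]
    [NormedSpace 𝕜 G] {μ : Measure ℝ} [IsLocallyFiniteMeasure μ] {f : H → ℝ → G}
    {f' : H → ℝ → H →L[𝕜] G} (hf : ∀ x, Continuous (f x)) (hf' : Continuous (uncurry f'))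
    (hderiv : ∀ x t, HasFDerivAt (fun y => f y t) (f' x t) x) (a b : ℝ) (x : H) :
    HasFDerivAt (fun y => ∫ t in a..b, f y t ∂μ) (∫ t in a..b, f' x t ∂μ) x := by
  obtain ⟨C, hC⟩ := exists_eventually_forall_norm_le_of_isCompact isCompact_uIcc hf' x
  have hf'x : Continuous (f' x) := by fun_prop
  exact intervalIntegral.hasFDerivAt_integral_of_dominated_of_fderiv_le (F' := f')
    (bound := fun _ => C) hC
    (.of_forall fun y => (hf y).aestronglyMeasurable) ((hf x).intervalIntegrable a b)
    hf'x.aestronglyMeasurable (.of_forall fun t ht y hy => hy t (Set.uIoc_subset_uIcc ht))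
    intervalIntegrable_const (.of_forall fun t _ y _ => hderiv y t)

section HomologicalEquation

variable {E F : Type*} [NormedAddCommGroup E] [NormedSpace ℝ E] [NormedAddCommGroup F]
  [NormedSpace ℝ F] {P : E → F}

/-- The average `[P]` of `P` along the linear flow `x ↦ x + t • ω` for times `t ∈ [0, T]`. The
value for `T = 0` is `0`. -/
noncomputable def timeAverage (P : E → F) (ω : E) (T : ℝ) (x : E) : F :=
  (1 / T) • ∫ t in (0 : ℝ)..T, P (x + t • ω)

/-- The generating function `W` of the averaging transformation, which solves the homological
equation `⟨ω, ∇W⟩ = -P + [P]` when `T • ω` is a period of `P`. The value for `T = 0` is `0`. -/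
noncomputable def generatingFunction (P : E → F) (ω : E) (T : ℝ) (x : E) : F :=
  -(1 / T) • ∫ t in (0 : ℝ)..T, t • P (x + t • ω)

theorem hasFDerivAt_generatingFunction (hP : ContDiff ℝ 1 P) (ω : E) (T : ℝ) (x : E) :
    HasFDerivAt (generatingFunction P ω T)
      (-(1 / T) • ∫ t in (0 : ℝ)..T, t • fderiv ℝ P (x + t • ω)) x := by
  have : Continuous (fderiv ℝ P) := hP.continuous_fderiv one_ne_zero
  have hderiv (y : E) (t : ℝ) :
      HasFDerivAt (fun z => t • P (z + t • ω)) (t • fderiv ℝ P (y + t • ω)) y :=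
    ((hasFDerivAt_comp_add_right (t • ω)).2
      (hP.differentiable one_ne_zero _).hasFDerivAt).const_smul t
  exact (hasFDerivAt_intervalIntegral_of_continuous_fderiv (fun y => by fun_prop) (by fun_prop)
    hderiv 0 T x).const_smul _

theorem integral_smul_fderiv_add_smul_apply [CompleteSpace F] (hP : ContDiff ℝ 1 P) (ω : E)
    (T : ℝ) (x : E) :
    ∫ t in (0 : ℝ)..T, t • fderiv ℝ P (x + t • ω) ω =
      T • P (x + T • ω) - ∫ t in (0 : ℝ)..T, P (x + t • ω) := by
  have : Continuous (fderiv ℝ P) := hP.continuous_fderiv one_ne_zero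
  have hcont : Continuous fun t : ℝ => fderiv ℝ P (x + t • ω) ω := by fun_prop
  have hline (t : ℝ) : HasDerivAt (fun s : ℝ => x + s • ω) ω t := by
    simpa only [id, one_smul] using ((hasDerivAt_id t).smul_const ω).const_add x
  have hflow (t : ℝ) : HasDerivAt (fun s : ℝ => P (x + s • ω)) (fderiv ℝ P (x + t • ω) ω) t :=
    (hP.differentiable one_ne_zero _).hasFDerivAt.comp_hasDerivAt t (hline t)
  simpa only [id, one_smul, zero_smul, sub_zero] using
    intervalIntegral.integral_smul_deriv_eq_deriv_smul (fun t _ => hasDerivAt_id t)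
      (fun t _ => hflow t) intervalIntegrable_const (hcont.intervalIntegrable 0 T)

theorem fderiv_generatingFunction_apply [CompleteSpace F] (hP : ContDiff ℝ 1 P) (ω : E) {T : ℝ}
    (hT : T ≠ 0) (x : E) :
    fderiv ℝ (generatingFunction P ω T) x ω = -P (x + T • ω) + timeAverage P ω T x := by
  have : Continuous (fderiv ℝ P) := hP.continuous_fderiv one_ne_zero
  have hcont : Continuous fun t : ℝ => t • fderiv ℝ P (x + t • ω) := by fun_prop
  calc
    fderiv ℝ (generatingFunction P ω T) x ω
      = -(1 / T) • ∫ t in (0 : ℝ)..T, t • fderiv ℝ P (x + t • ω) ω := by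
        rw [(hasFDerivAt_generatingFunction hP ω T x).fderiv, smul_apply,
          ContinuousLinearMap.intervalIntegral_apply (hcont.intervalIntegrable 0 T)]
        simp only [smul_apply]
    _ = -(1 / T) • (T • P (x + T • ω) - ∫ t in (0 : ℝ)..T, P (x + t • ω)) := by
        rw [integral_smul_fderiv_add_smul_apply hP]
    _ = -P (x + T • ω) + timeAverage P ω T x := by
        rw [timeAverage, smul_sub, smul_smul, neg_mul, one_div_mul_cancel hT]
        module

theorem stmt_11_general [CompleteSpace F] (hP : ContDiff ℝ 1 P) {ω : E} {T : ℝ} (hT : T ≠ 0)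
    (hper : Periodic P (T • ω)) :
    Differentiable ℝ (generatingFunction P ω T) ∧
      ∀ x, fderiv ℝ (generatingFunction P ω T) x ω = -P x + timeAverage P ω T x :=
  ⟨fun x => (hasFDerivAt_generatingFunction hP ω T x).differentiableAt,
    fun x => by rw [fderiv_generatingFunction_apply hP ω hT, hper]⟩

end HomologicalEquation

/-- Solution of the homological equation at a resonant frequency (Appendix A of the
paper): with [P](x) = (1/T)∫₀ᵀ P(x+tω) dt and W(x) = −(1/T)∫₀ᵀ t·P(x+tω) dt, the
generating function W is differentiable and ⟨ω, ∇W(x)⟩ = −P(x) + [P](x). -/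
theorem stmt_11 (n : ℕ) (hn : 1 ≤ n) (P : (Fin n → ℝ) → ℝ) (hP : ContDiff ℝ 1 P)
    (hper : ∀ (x : Fin n → ℝ) (k : Fin n → ℤ), P (x + (fun i => (k i : ℝ))) = P x)
    (ω : Fin n → ℝ) (T : ℝ) (hT : 0 < T) (hres : ∀ i, ∃ k : ℤ, T * ω i = (k : ℝ)) :
    Differentiable ℝ
        (fun x : Fin n → ℝ => -(1 / T) * ∫ t in (0:ℝ)..T, t * P (x + t • ω)) ∧
      ∀ x : Fin n → ℝ,
        fderiv ℝ (fun y : Fin n → ℝ => -(1 / T) * ∫ t in (0:ℝ)..T, t * P (y + t • ω)) x ω =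
          -P x + (1 / T) * ∫ t in (0:ℝ)..T, P (x + t • ω) :=
  stmt_11_general hP hT.ne' (periodic_of_forall_eq_intCast (fun k x => hper x k) hres)
end

section
/- Let n ≥ 1, m > 0, and let h : ℝⁿ → ℝ be continuously differentiable with a strongly monotone gradient: ⟨∇h(u) − ∇h(v), u − v⟩ ≥ m‖u − v‖² for all u, v ∈ ℝⁿ. Then for every y ∈ ℝⁿ and every real K > 1 there exist an integer T with 1 ≤ T < K, an integer vector p ∈ ℤⁿ, and a point y* ∈ ℝⁿ such that ∇h(y*) = p/T and ‖y − y*‖ ≤ √n / (m·T·K^{1/n}). -/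
open scoped RealInnerProductSpace

/-!
Dirichlet's simultaneous approximation theorem comes from packing the torus `(ℝ/ℤ)ⁿ` with its sup
norm: the closed balls of diameter `δ ≤ 1` around `0, ω, …, Nω`, where `N + 1 = ⌈K⌉`, have total
volume `(N + 1) δⁿ ≥ 1`, so two of them meet, as the torus is connected, and the difference of their
indices is the period `T ≤ N < K`.

A strongly monotone gradient `∇h` attains every value `w`: the gradient of `h - ⟪w, ·⟫` points
outwards on large spheres, so the minimum of this function on a large ball is interior. Strong
monotonicity moreover gives `m ‖u - v‖ ≤ ‖∇h u - ∇h v‖`, which turns a bound on frequencies into a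
bound on actions.
-/

open Metric MeasureTheory

section StronglyMonotone

variable {E : Type*} [NormedAddCommGroup E] [InnerProductSpace ℝ E]

/-- Strong monotonicity with modulus `m` of a vector field `F` on a real inner product space. For a
gradient field `F = ∇h` this expresses the uniform convexity of `h`. -/
def IsStronglyMonotone (m : ℝ) (F : E → E) : Prop :=
  ∀ u v : E, m * ‖u - v‖ ^ 2 ≤ ⟪F u - F v, u - v⟫

namespace IsStronglyMonotone

variable {m : ℝ} {F : E → E}

lemma mul_norm_sub_le_norm_sub (hF : IsStronglyMonotone m F) (u v : E) :
    m * ‖u - v‖ ≤ ‖F u - F v‖ := by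
  rcases (norm_nonneg (u - v)).eq_or_lt with hzero | hpos
  · simp [← hzero]
  · refine le_of_mul_le_mul_right ?_ hpos
    calc m * ‖u - v‖ * ‖u - v‖ = m * ‖u - v‖ ^ 2 := by ring
      _ ≤ ⟪F u - F v, u - v⟫ := hF u v
      _ ≤ ‖F u - F v‖ * ‖u - v‖ := real_inner_le_norm _ _

lemma inner_sub_pos_of_norm_sub_lt (hF : IsStronglyMonotone m F) {w x c : E}
    (hx : ‖F c - w‖ < m * ‖x - c‖) : 0 < ⟪F x - w, x - c⟫ := by
  have hxc : 0 < ‖x - c‖ := by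
    refine (norm_nonneg _).lt_of_ne' fun hzero => ?_
    rw [hzero, mul_zero] at hx
    exact (norm_nonneg _).not_gt hx
  calc 0 < (m * ‖x - c‖ - ‖F c - w‖) * ‖x - c‖ := mul_pos (sub_pos.2 hx) hxc
    _ = m * ‖x - c‖ ^ 2 - ‖F c - w‖ * ‖x - c‖ := by ring
    _ ≤ ⟪F x - F c, x - c⟫ + ⟪F c - w, x - c⟫ := by
      have hcauchy := neg_le_of_abs_le (abs_real_inner_le_norm (F c - w) (x - c))
      linarith [hF x c]
    _ = ⟪F x - w, x - c⟫ := by rw [← inner_add_left, sub_add_sub_cancel]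

end IsStronglyMonotone

variable [ProperSpace E]

lemma exists_mem_ball_gradient_eq_zero {f : E → ℝ} {f' : E → E} {c : E} {R : ℝ} (hR : 0 ≤ R)
    (hf : ∀ x ∈ closedBall c R, HasGradientAt f (f' x) x)
    (houtward : ∀ x ∈ sphere c R, 0 < ⟪f' x, x - c⟫) : ∃ x ∈ ball c R, f' x = 0 := by
  have hc : c ∈ closedBall c R := mem_closedBall_self hR
  obtain ⟨x, hx, hmin⟩ :=
    (isCompact_closedBall c R).exists_isMinOn ⟨c, hc⟩ (HasGradientAt.continuousOn hf)
  have hfx : HasFDerivAt f (InnerProductSpace.toDual ℝ E (f' x)) x := (hf x hx).hasFDerivAt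
  have hinward : 0 ≤ ⟪f' x, c - x⟫ := by
    simpa only [InnerProductSpace.toDual_apply_apply] using
      hmin.localize.hasFDerivWithinAt_nonneg hfx.hasFDerivWithinAt
        (sub_mem_posTangentConeAt_of_segment_subset
          ((convex_closedBall c R).segment_subset hx hc))
  have hxball : x ∈ ball c R := by
    refine (mem_closedBall.1 hx).lt_of_ne fun hsphere => ?_
    have := houtward x hsphere
    rw [← neg_sub c x, inner_neg_right] at this
    linarith
  have hlocal : IsLocalMin f x := hmin.isLocalMin (closedBall_mem_nhds_of_mem hxball)
  exact ⟨x, hxball, (InnerProductSpace.toDual ℝ E).map_eq_zero_iff.1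
    (hlocal.hasFDerivAt_eq_zero hfx)⟩

theorem IsStronglyMonotone.surjective_gradient {m : ℝ} {h : E → ℝ}
    (hmono : IsStronglyMonotone m (gradient h)) (hm : 0 < m) (hh : Differentiable ℝ h) :
    Function.Surjective (gradient h) := by
  intro w
  obtain ⟨R, hR⟩ := exists_gt (‖gradient h 0 - w‖ / m)
  have hR0 : 0 ≤ R := (by positivity : 0 ≤ ‖gradient h 0 - w‖ / m).trans hR.le
  have htilt (x : E) : HasGradientAt (fun z => h z - ⟪w, z⟫) (gradient h x - w) x := by
    rw [hasGradientAt_iff_hasFDerivAt, map_sub]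
    exact (hh x).hasGradientAt.hasFDerivAt.sub (InnerProductSpace.toDual ℝ E w).hasFDerivAt
  obtain ⟨x, -, hx⟩ := exists_mem_ball_gradient_eq_zero hR0 (fun x _ => htilt x) fun x hx =>
    hmono.inner_sub_pos_of_norm_sub_lt (c := 0) <| by
      rwa [← dist_eq_norm x, mem_sphere.1 hx, ← div_lt_iff₀' hm]
  exact ⟨x, sub_eq_zero.1 hx⟩

end StronglyMonotone

section Dirichlet

variable {ι : Type*} [Fintype ι]

lemma volume_closedBall_pi_unitAddCircle (x : ι → UnitAddCircle) {r : ℝ} (hr : 0 ≤ r) :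
    volume (closedBall x r) = ENNReal.ofReal (min 1 (2 * r) ^ Fintype.card ι) := by
  have : Fact ((0 : ℝ) < 1) := ⟨one_pos⟩
  rw [volume_pi_closedBall x hr]
  simp only [AddCircle.volume_closedBall, Finset.prod_const, Finset.card_univ]
  rw [ENNReal.ofReal_pow (by positivity)]

theorem exists_nat_lt_forall_abs_mul_sub_int_le (ω : ι → ℝ) {K δ : ℝ} (hK : 1 < K) (hδ : 0 ≤ δ)
    (hKδ : 1 ≤ K * δ ^ Fintype.card ι) :
    ∃ (T : ℕ) (p : ι → ℤ), 1 ≤ T ∧ (T : ℝ) < K ∧ ∀ i, |(T : ℝ) * ω i - p i| ≤ δ := by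
  have hceil : 1 < ⌈K⌉₊ := Nat.lt_ceil.2 (by exact_mod_cast hK)
  obtain ⟨N, hN⟩ : ∃ N, ⌈K⌉₊ = N + 1 := Nat.exists_eq_add_one.2 (by omega)
  have hKN : K ≤ (N + 1 : ℕ) := hN ▸ Nat.le_ceil K
  have hmin : 1 ≤ K * min 1 δ ^ Fintype.card ι := by
    rcases min_choice 1 δ with hmin | hmin <;> rw [hmin]
    · simpa only [one_pow, mul_one] using hK.le
    · exact hKδ
  have : IsProbabilityMeasure (volume : Measure UnitAddCircle) := ⟨UnitAddCircle.measure_univ⟩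
  have hvolume : volume (Set.univ : Set (ι → UnitAddCircle)) ≤
      (N + 1) • volume (closedBall (0 : ι → UnitAddCircle) (δ / 2)) := by
    rw [measure_univ, volume_closedBall_pi_unitAddCircle _ (by positivity),
      mul_div_cancel₀ _ two_ne_zero, ← ENNReal.ofReal_nsmul, ENNReal.one_le_ofReal, nsmul_eq_mul]
    exact hmin.trans (by gcongr)
  obtain ⟨T, hT, hnorm⟩ := NormedAddCommGroup.exists_norm_nsmul_le
    (fun i => (ω i : UnitAddCircle)) (by omega : 0 < N) δ hvolume
  refine ⟨T, fun i => round ((T : ℝ) * ω i), hT.1, Nat.lt_ceil.1 (by grind), fun i => ?_⟩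
  calc |(T : ℝ) * ω i - round ((T : ℝ) * ω i)| = ‖(T • ω i : UnitAddCircle)‖ := by
        rw [← AddCircle.coe_nsmul, UnitAddCircle.norm_eq, nsmul_eq_mul]
    _ ≤ δ := (norm_le_pi_norm (T • fun i => (ω i : UnitAddCircle)) i).trans hnorm

lemma norm_le_sqrt_card_mul_of_forall_norm_le {x : EuclideanSpace ℝ ι} {r : ℝ} (hr : 0 ≤ r)
    (hx : ∀ i, ‖x i‖ ≤ r) : ‖x‖ ≤ √(Fintype.card ι) * r := by
  calc ‖x‖ = √(∑ i, ‖x i‖ ^ 2) := EuclideanSpace.norm_eq x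
    _ ≤ √(∑ _i : ι, r ^ 2) := by gcongr with i; exact hx i
    _ = √(Fintype.card ι) * r := by
      rw [Finset.sum_const, Finset.card_univ, nsmul_eq_mul, Real.sqrt_mul (Nat.cast_nonneg _),
        Real.sqrt_sq hr]

theorem exists_nat_lt_norm_sub_toLp_div_le (ω : EuclideanSpace ℝ ι) {K δ : ℝ} (hK : 1 < K)
    (hδ : 0 ≤ δ) (hKδ : 1 ≤ K * δ ^ Fintype.card ι) :
    ∃ (T : ℕ) (p : ι → ℤ), 1 ≤ T ∧ (T : ℝ) < K ∧
      ‖ω - WithLp.toLp 2 fun i => (p i : ℝ) / T‖ ≤ √(Fintype.card ι) * (δ / T) := by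
  obtain ⟨T, p, hT, hTK, hp⟩ := exists_nat_lt_forall_abs_mul_sub_int_le ω hK hδ hKδ
  refine ⟨T, p, hT, hTK, norm_le_sqrt_card_mul_of_forall_norm_le (by positivity) fun i => ?_⟩
  have hT0 : (0 : ℝ) < T := by exact_mod_cast hT
  calc ‖ω i - (p i : ℝ) / T‖ = |(T : ℝ) * ω i - p i| / T := by
        rw [← abs_of_pos hT0, ← abs_div, abs_of_pos hT0, sub_div, mul_div_cancel_left₀ _ hT0.ne',
          Real.norm_eq_abs]
    _ ≤ δ / T := by gcongr; exact hp i

end Dirichlet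

/-- Quantitative covering property (Appendix A of the paper): Dirichlet approximation
of the frequency ∇h(y) by a rational frequency p/T of period T < K, transferred to the
action variable by the strong monotonicity of ∇h. -/
theorem stmt_13 (n : ℕ) (hn : 1 ≤ n) (m : ℝ) (hm : 0 < m)
    (h : EuclideanSpace ℝ (Fin n) → ℝ) (hh : ContDiff ℝ 1 h)
    (hmono : ∀ u v : EuclideanSpace ℝ (Fin n),
      m * ‖u - v‖ ^ 2 ≤ ⟪gradient h u - gradient h v, u - v⟫) :
    ∀ y : EuclideanSpace ℝ (Fin n), ∀ K : ℝ, 1 < K →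
      ∃ (T : ℕ) (p : Fin n → ℤ) (ystar : EuclideanSpace ℝ (Fin n)),
        1 ≤ T ∧ (T : ℝ) < K ∧
        (∀ i : Fin n, gradient h ystar i = (p i : ℝ) / (T : ℝ)) ∧
        ‖y - ystar‖ ≤ Real.sqrt n / (m * T * K ^ ((1 : ℝ) / (n : ℝ))) := by
  intro y K hK
  have hgrad : IsStronglyMonotone m (gradient h) := hmono
  set r : ℝ := K ^ ((1 : ℝ) / (n : ℝ)) with hr
  have hr0 : 0 < r := by positivity
  have hrn : r ^ n = K := by
    rw [hr, one_div, Real.rpow_inv_natCast_pow (by positivity) (by omega)]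
  have hKr : 1 ≤ K * r⁻¹ ^ Fintype.card (Fin n) := by
    rw [Fintype.card_fin, inv_pow, hrn, mul_inv_cancel₀ (by positivity)]
  obtain ⟨T, p, hT, hTK, happrox⟩ :=
    exists_nat_lt_norm_sub_toLp_div_le (gradient h y) hK (by positivity) hKr
  obtain ⟨ystar, hystar⟩ := hgrad.surjective_gradient hm (hh.differentiable one_ne_zero)
    (WithLp.toLp 2 fun i => (p i : ℝ) / T)
  rw [← hystar, Fintype.card_fin] at happrox
  refine ⟨T, p, ystar, hT, hTK, fun i => by rw [hystar], ?_⟩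
  calc ‖y - ystar‖ ≤ √n * (r⁻¹ / T) / m :=
        (le_div_iff₀' hm).2 ((hgrad.mul_norm_sub_le_norm_sub y ystar).trans happrox)
    _ = √n / (m * T * r) := by field_simp
end

section
/- Let n ≥ 1, let a < b be real numbers, and let L and Lᵢ (i ∈ ℕ) be continuous functions ℝⁿ × ℝⁿ × ℝ → ℝ such that Lᵢ → L uniformly on every compact subset of ℝⁿ × ℝⁿ × ℝ. For each i let γᵢ : [a,b] → ℝⁿ be a C¹ curve that minimizes the action ζ ↦ ∫ₐᵇ Lᵢ(ζ(t), ζ'(t), t) dt among all Lipschitz curves ζ : [a,b] → ℝⁿ with ζ(a) = γᵢ(a) and ζ(b) = γᵢ(b). If γ : [a,b] → ℝⁿ is a C¹ curve such that γᵢ → γ and γᵢ' → γ' uniformly on [a,b], then γ minimizes the action ζ ↦ ∫ₐᵇ L(ζ(t), ζ'(t), t) dt among all Lipschitz curves ζ : [a,b] → ℝⁿ with ζ(a) = γ(a) and ζ(b) = γ(b). -/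
open Set

/-!
If `ζ` is a competitor for the limit curve `γ`, then `ζ + (γᵢ - γ)` is a competitor for `γᵢ`. Both
families `γᵢ` and `ζ + (γᵢ - γ)` are eventually equi-Lipschitz, and together with their derivatives
they converge almost everywhere, to `γ` and `ζ` respectively. Dominated convergence therefore passes
to the limit on both sides of the inequality between the `Lᵢ`-actions.
-/

open MeasureTheory Filter Topology
open scoped NNReal

section UniformBounds

variable {ι α E : Type*} {l : Filter ι} [NormedAddCommGroup E]

lemma exists_eventually_norm_le_of_tendstoUniformlyOn {f : ι → α → E} {g : α → E} {s : Set α}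
    (hfg : TendstoUniformlyOn f g l s) (hg : Bornology.IsBounded (g '' s)) :
    ∃ C, ∀ᶠ i in l, ∀ x ∈ s, ‖f i x‖ ≤ C := by
  obtain ⟨C, hC⟩ := hg.exists_norm_le
  refine ⟨C + 1, ?_⟩
  filter_upwards [Metric.tendstoUniformlyOn_iff.1 hfg 1 one_pos] with i hi x hx
  have hdist : ‖f i x - g x‖ < 1 := by simpa only [dist_eq_norm, norm_sub_rev] using hi x hx
  linarith [norm_le_norm_add_norm_sub' (f i x) (g x), hC _ (mem_image_of_mem g hx)]

lemma exists_eventually_lipschitzOnWith_of_tendstoUniformlyOn_derivWithin [NormedSpace ℝ E]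
    {f : ι → ℝ → E} {g : ℝ → E} {s : Set ℝ} (hs : Convex ℝ s)
    (hf : ∀ᶠ i in l, DifferentiableOn ℝ (f i) s)
    (hfg : TendstoUniformlyOn (fun i => derivWithin (f i) s) g l s)
    (hg : Bornology.IsBounded (g '' s)) :
    ∃ K : ℝ≥0, ∀ᶠ i in l, LipschitzOnWith K (f i) s := by
  obtain ⟨C, hC⟩ := exists_eventually_norm_le_of_tendstoUniformlyOn hfg hg
  refine ⟨C.toNNReal, ?_⟩
  filter_upwards [hf, hC] with i hfi hCi
  exact hs.lipschitzOnWith_of_nnnorm_derivWithin_le hfi fun t ht =>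
    NNReal.coe_le_coe.1 ((hCi t ht).trans (Real.le_coe_toNNReal C))

end UniformBounds

lemma lipschitzOnWith_of_tendsto {ι α β : Type*} [PseudoEMetricSpace α] [PseudoEMetricSpace β]
    {l : Filter ι} [l.NeBot] {f : ι → α → β} {g : α → β} {K : ℝ≥0} {s : Set α}
    (hf : ∀ᶠ i in l, LipschitzOnWith K (f i) s)
    (hfg : ∀ x ∈ s, Tendsto (fun i => f i x) l (𝓝 (g x))) : LipschitzOnWith K g s :=
  fun x hx y hy => le_of_tendsto ((hfg x hx).edist (hfg y hy)) (hf.mono fun _ hi => hi hx hy)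

lemma exists_isCompact_eventually_mapsTo_of_lipschitzOnWith {ι α β : Type*}
    [PseudoMetricSpace α] [PseudoMetricSpace β] [ProperSpace β] {l : Filter ι} {f : ι → α → β}
    {K : ℝ≥0} {s : Set α} {x : α} {y : β} (hs : Bornology.IsBounded s) (hx : x ∈ s)
    (hf : ∀ᶠ i in l, LipschitzOnWith K (f i) s) (hfx : Tendsto (fun i => f i x) l (𝓝 y)) :
    ∃ k : Set β, IsCompact k ∧ ∀ᶠ i in l, MapsTo (f i) s k := by
  refine ⟨Metric.closedBall y (K * Metric.diam s + 1), isCompact_closedBall _ _, ?_⟩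
  filter_upwards [hf, hfx.eventually (Metric.closedBall_mem_nhds y one_pos)] with i hi hix z hz
  calc dist (f i z) y ≤ dist (f i z) (f i x) + dist (f i x) y := dist_triangle _ _ _
    _ ≤ K * dist z x + 1 := add_le_add (hi.dist_le_mul z hz x hx) hix
    _ ≤ K * Metric.diam s + 1 := by gcongr; exact Metric.dist_le_diam_of_mem hs hz hx

lemma tendsto_integral_comp_of_tendstoLocallyUniformly {ι α P E : Type*} {l : Filter ι}
    [l.IsCountablyGenerated] [MeasurableSpace α] {μ : Measure α} [IsFiniteMeasure μ]
    [TopologicalSpace P] [NormedAddCommGroup E] [NormedSpace ℝ E]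
    {F : ι → P → E} {G : P → E} {q : ι → α → P} {r : α → P} {s : Set P}
    (hF : ∀ᶠ i in l, Continuous (F i)) (hFG : TendstoLocallyUniformly F G l)
    (hq : ∀ᶠ i in l, AEStronglyMeasurable (q i) μ) (hs : IsCompact s)
    (hqs : ∀ᶠ i in l, ∀ᵐ x ∂μ, q i x ∈ s)
    (hqr : ∀ᵐ x ∂μ, Tendsto (fun i => q i x) l (𝓝 (r x))) :
    Tendsto (fun i => ∫ x, F i (q i x) ∂μ) l (𝓝 (∫ x, G (r x) ∂μ)) := by
  obtain rfl | _ := l.eq_or_neBot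
  · exact tendsto_bot
  have hG : Continuous G := hFG.continuous hF.frequently
  have hFGs : TendstoUniformlyOn F G l s :=
    (tendstoLocallyUniformlyOn_iff_tendstoUniformlyOn_of_compact hs).1
      hFG.tendstoLocallyUniformlyOn
  obtain ⟨C, hC⟩ := exists_eventually_norm_le_of_tendstoUniformlyOn hFGs (hs.image hG).isBounded
  refine tendsto_integral_filter_of_dominated_convergence (fun _ => C) ?_ ?_
    (integrable_const C) ?_
  · filter_upwards [hF, hq] with i hFi hqi using hFi.comp_aestronglyMeasurable hqi
  · filter_upwards [hC, hqs] with i hCi hqi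
    filter_upwards [hqi] with x hx using hCi _ hx
  · filter_upwards [hqr] with x hx using hFG.tendsto_comp hG.continuousAt hx

section DerivWithin

lemma ae_restrict_mem_nhds_of_convex {V : Type*} [NormedAddCommGroup V] [NormedSpace ℝ V]
    [FiniteDimensional ℝ V] [MeasurableSpace V] [BorelSpace V] (μ : Measure V)
    [μ.IsAddHaarMeasure] {s : Set V} (hs : Convex ℝ s) : ∀ᵐ x ∂μ.restrict s, s ∈ 𝓝 x := by
  rw [← Measure.restrict_congr_set (interior_ae_eq_of_null_frontier (hs.addHaar_frontier μ))]
  filter_upwards [ae_restrict_mem isOpen_interior.measurableSet] with x hx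
    using mem_interior_iff_mem_nhds.1 hx

variable {E : Type*} [NormedAddCommGroup E] [NormedSpace ℝ E] {s : Set ℝ}

lemma aestronglyMeasurable_derivWithin_of_convex [CompleteSpace E] (hs : Convex ℝ s)
    (f : ℝ → E) : AEStronglyMeasurable (derivWithin f s) (volume.restrict s) := by
  refine (aestronglyMeasurable_deriv f _).congr ?_
  filter_upwards [ae_restrict_mem_nhds_of_convex volume hs] with t ht
    using (derivWithin_of_mem_nhds ht).symm

lemma ae_norm_derivWithin_le_of_lipschitzOnWith (hs : Convex ℝ s) {f : ℝ → E} {K : ℝ≥0}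
    (hf : LipschitzOnWith K f s) : ∀ᵐ t ∂volume.restrict s, ‖derivWithin f s t‖ ≤ K := by
  filter_upwards [ae_restrict_mem_nhds_of_convex volume hs] with t ht
  rw [derivWithin_of_mem_nhds ht]
  exact norm_deriv_le_of_lipschitzOn ht hf

lemma ae_tendsto_derivWithin_add_sub [FiniteDimensional ℝ E] {ι : Type*} [Countable ι]
    {l : Filter ι} (hs : MeasurableSet s) {ζ g : ℝ → E} {f : ι → ℝ → E} {Kζ Kf Kg : ℝ≥0}
    (hζ : LipschitzOnWith Kζ ζ s) (hg : LipschitzOnWith Kg g s)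
    (hf : ∀ᶠ i in l, LipschitzOnWith Kf (f i) s)
    (hfg : ∀ᵐ t ∂volume.restrict s,
      Tendsto (fun i => derivWithin (f i) s t) l (𝓝 (derivWithin g s t))) :
    ∀ᵐ t ∂volume.restrict s,
      Tendsto (fun i => derivWithin (ζ + (f i - g)) s t) l (𝓝 (derivWithin ζ s t)) := by
  have hf_diff : ∀ᵐ t, ∀ i, LipschitzOnWith Kf (f i) s →
      t ∈ s → DifferentiableWithinAt ℝ (f i) s t :=
    ae_all_iff.2 fun i => eventually_imp_distrib_left.2 fun hi =>
      hi.ae_differentiableWithinAt_of_mem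
  filter_upwards [ae_restrict_mem hs, ae_restrict_of_ae hf_diff, hfg,
    ae_restrict_of_ae hζ.ae_differentiableWithinAt_of_mem,
    ae_restrict_of_ae hg.ae_differentiableWithinAt_of_mem] with t hts hft hfgt hζt hgt
  have hlim : Tendsto
      (fun i => derivWithin ζ s t + (derivWithin (f i) s t - derivWithin g s t)) l
      (𝓝 (derivWithin ζ s t)) := by
    simpa only [sub_self, add_zero] using
      (hfgt.sub_const (derivWithin g s t)).const_add (derivWithin ζ s t)
  refine hlim.congr' ?_
  filter_upwards [hf] with i hi
  rw [derivWithin_add (hζt hts) ((hft i hi hts).sub (hgt hts)),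
    derivWithin_sub (hft i hi hts) (hgt hts)]

end DerivWithin

section Action

variable {E : Type*} [NormedAddCommGroup E] [NormedSpace ℝ E]

/-- The action `∫ₐᵇ L(ζ(t), ζ'(t), t) dt` of a curve `ζ : [a, b] → E`. Only the values of `ζ` on
`[a, b]` matter when `a ≤ b`, since the velocity is the derivative within `[a, b]`; it takes the
value `0` where this derivative does not exist. -/
noncomputable def lagrangianAction (L : E × E × ℝ → ℝ) (a b : ℝ) (ζ : ℝ → E) : ℝ :=
  ∫ t in a..b, L (ζ t, derivWithin ζ (Icc a b) t, t)

/-- The curve `γ` minimizes the action of `L` among the Lipschitz curves on `[a, b]` with the same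
endpoints. The curve `γ` itself is not required to be Lipschitz. -/
def IsActionMinimizer (L : E × E × ℝ → ℝ) (a b : ℝ) (γ : ℝ → E) : Prop :=
  ∀ ζ : ℝ → E, (∃ K, LipschitzOnWith K ζ (Icc a b)) → ζ a = γ a → ζ b = γ b →
    lagrangianAction L a b γ ≤ lagrangianAction L a b ζ

variable [FiniteDimensional ℝ E] {ι : Type*} {l : Filter ι} [l.IsCountablyGenerated] {a b : ℝ}
  {L : E × E × ℝ → ℝ} {Lseq : ι → E × E × ℝ → ℝ} {K : ℝ≥0}

lemma tendsto_lagrangianAction (hab : a ≤ b) (hLseq : ∀ᶠ i in l, Continuous (Lseq i))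
    (hL : TendstoLocallyUniformly Lseq L l) {ζseq : ι → ℝ → E} {ζ : ℝ → E}
    (hLip : ∀ᶠ i in l, LipschitzOnWith K (ζseq i) (Icc a b))
    (hζ : ∀ t ∈ Icc a b, Tendsto (fun i => ζseq i t) l (𝓝 (ζ t)))
    (hζ' : ∀ᵐ t ∂volume.restrict (Icc a b),
      Tendsto (fun i => derivWithin (ζseq i) (Icc a b) t) l (𝓝 (derivWithin ζ (Icc a b) t))) :
    Tendsto (fun i => lagrangianAction (Lseq i) a b (ζseq i)) l
      (𝓝 (lagrangianAction L a b ζ)) := by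
  have : ProperSpace E := FiniteDimensional.proper_real E
  have : CompleteSpace E := FiniteDimensional.complete ℝ E
  have ha : a ∈ Icc a b := left_mem_Icc.2 hab
  obtain ⟨k, hk, hζk⟩ :=
    exists_isCompact_eventually_mapsTo_of_lipschitzOnWith isCompact_Icc.isBounded ha hLip (hζ a ha)
  simp only [lagrangianAction, intervalIntegral.integral_of_le hab, ← integral_Icc_eq_integral_Ioc]
  refine tendsto_integral_comp_of_tendstoLocallyUniformly hLseq hL ?_
    (hk.prod ((isCompact_closedBall (0 : E) K).prod (isCompact_Icc (a := a) (b := b)))) ?_ ?_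
  · filter_upwards [hLip] with i hi
    exact (hi.continuousOn.aestronglyMeasurable measurableSet_Icc).prodMk
      ((aestronglyMeasurable_derivWithin_of_convex (convex_Icc a b) _).prodMk
        aestronglyMeasurable_id)
  · filter_upwards [hLip, hζk] with i hi hik
    filter_upwards [ae_restrict_mem measurableSet_Icc,
      ae_norm_derivWithin_le_of_lipschitzOnWith (convex_Icc a b) hi] with t ht ht'
    exact ⟨hik ht, mem_closedBall_zero_iff.2 ht', ht⟩
  · filter_upwards [ae_restrict_mem measurableSet_Icc, hζ'] with t ht ht'
    exact (hζ t ht).prodMk_nhds (ht'.prodMk_nhds tendsto_const_nhds)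

theorem stmt_14_general [Countable ι] [l.NeBot] (hab : a ≤ b)
    (hLseq : ∀ᶠ i in l, Continuous (Lseq i)) (hL : TendstoLocallyUniformly Lseq L l)
    {γseq : ι → ℝ → E} {γ : ℝ → E} (hLip : ∀ᶠ i in l, LipschitzOnWith K (γseq i) (Icc a b))
    (hmin : ∀ᶠ i in l, IsActionMinimizer (Lseq i) a b (γseq i))
    (hγ : ∀ t ∈ Icc a b, Tendsto (fun i => γseq i t) l (𝓝 (γ t)))
    (hγ' : ∀ᵐ t ∂volume.restrict (Icc a b),
      Tendsto (fun i => derivWithin (γseq i) (Icc a b) t) l (𝓝 (derivWithin γ (Icc a b) t))) :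
    IsActionMinimizer L a b γ := by
  rintro ζ ⟨Kζ, hζ⟩ hζa hζb
  have hγLip : LipschitzOnWith K γ (Icc a b) := lipschitzOnWith_of_tendsto hLip hγ
  have hcompLip : ∀ᶠ i in l, LipschitzOnWith (Kζ + (K + K)) (ζ + (γseq i - γ)) (Icc a b) :=
    hLip.mono fun i hi => hζ.add (hi.sub hγLip)
  have hcomp : ∀ t ∈ Icc a b, Tendsto (fun i => (ζ + (γseq i - γ)) t) l (𝓝 (ζ t)) := by
    intro t ht
    simpa only [Pi.add_apply, Pi.sub_apply, sub_self, add_zero] using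
      ((hγ t ht).sub_const (γ t)).const_add (ζ t)
  refine le_of_tendsto_of_tendsto (tendsto_lagrangianAction hab hLseq hL hLip hγ hγ')
    (tendsto_lagrangianAction hab hLseq hL hcompLip hcomp
      (ae_tendsto_derivWithin_add_sub measurableSet_Icc hζ hγLip hLip hγ')) ?_
  filter_upwards [hmin, hcompLip] with i hmin_i hcompLip_i
  exact hmin_i _ ⟨_, hcompLip_i⟩ (by simp [hζa]) (by simp [hζb])

end Action

/-- Stability of action minimizers under C¹-uniform convergence of the curves and
locally uniform convergence of the Lagrangians (heart of the upper semi-continuity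
Theorems 6.2, 6.5 and 6.9 of the paper). -/
theorem stmt_14 (n : ℕ) (hn : 1 ≤ n) (a b : ℝ) (hab : a < b)
    (L : (Fin n → ℝ) → (Fin n → ℝ) → ℝ → ℝ)
    (Lseq : ℕ → (Fin n → ℝ) → (Fin n → ℝ) → ℝ → ℝ)
    (hL : Continuous fun q : (Fin n → ℝ) × (Fin n → ℝ) × ℝ => L q.1 q.2.1 q.2.2)
    (hLseq : ∀ i, Continuous fun q : (Fin n → ℝ) × (Fin n → ℝ) × ℝ =>
      Lseq i q.1 q.2.1 q.2.2)
    (hconv : ∀ Kc : Set ((Fin n → ℝ) × (Fin n → ℝ) × ℝ), IsCompact Kc →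
      TendstoUniformlyOn (fun i q => Lseq i q.1 q.2.1 q.2.2)
        (fun q => L q.1 q.2.1 q.2.2) Filter.atTop Kc)
    (γseq : ℕ → ℝ → (Fin n → ℝ)) (γ : ℝ → (Fin n → ℝ))
    (hγseq : ∀ i, ContDiffOn ℝ 1 (γseq i) (Icc a b))
    (hγ : ContDiffOn ℝ 1 γ (Icc a b))
    (hmin : ∀ i, ∀ ζ : ℝ → (Fin n → ℝ), (∃ K, LipschitzOnWith K ζ (Icc a b)) →
      ζ a = γseq i a → ζ b = γseq i b →
      (∫ t in a..b, Lseq i (γseq i t) (derivWithin (γseq i) (Icc a b) t) t) ≤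
        ∫ t in a..b, Lseq i (ζ t) (derivWithin ζ (Icc a b) t) t)
    (hc0 : TendstoUniformlyOn (fun i t => γseq i t) γ Filter.atTop (Icc a b))
    (hc1 : TendstoUniformlyOn (fun i t => derivWithin (γseq i) (Icc a b) t)
      (fun t => derivWithin γ (Icc a b) t) Filter.atTop (Icc a b)) :
    ∀ ζ : ℝ → (Fin n → ℝ), (∃ K, LipschitzOnWith K ζ (Icc a b)) →
      ζ a = γ a → ζ b = γ b →
      (∫ t in a..b, L (γ t) (derivWithin γ (Icc a b) t) t) ≤
        ∫ t in a..b, L (ζ t) (derivWithin ζ (Icc a b) t) t := by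
  have hγ'_bdd : Bornology.IsBounded (derivWithin γ (Icc a b) '' Icc a b) :=
    (isCompact_Icc.image_of_continuousOn
      (hγ.continuousOn_derivWithin (uniqueDiffOn_Icc hab) le_rfl)).isBounded
  obtain ⟨K, hLip⟩ := exists_eventually_lipschitzOnWith_of_tendstoUniformlyOn_derivWithin
    (convex_Icc a b) (.of_forall fun i => (hγseq i).differentiableOn one_ne_zero) hc1 hγ'_bdd
  exact stmt_14_general hab.le (.of_forall hLseq)
    (tendstoLocallyUniformly_iff_forall_isCompact.2 hconv) hLip (.of_forall hmin)
    (fun _ ht => hc0.tendsto_at ht)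
    (ae_restrict_of_forall_mem measurableSet_Icc fun _ ht => hc1.tendsto_at ht)
end

section
/- Let M ≥ 0 and let f : ℝ → ℝ be twice differentiable with f''(x) ≤ M for all x ∈ ℝ, and suppose f is bounded below. Then for every x ∈ ℝ, |f'(x)| ≤ (1 + M/2)·√(f(x) − inf f). -/
/-!
An upper bound `M` on the second derivative puts the graph of `f` below the parabola of curvature
`M` that touches it at `x`. Since `f` stays above its infimum, this parabola does too, so the
discriminant of `t ↦ (f x - inf f) + f' x * t + M / 2 * t ^ 2` is nonpositive, which says that
`|f' x| ≤ √(2 * M * (f x - inf f))`. Finally `2 * M ≤ (1 + M / 2) ^ 2`.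
-/

open Set Filter Topology

section Semiconcave

theorem strongConcaveOn_of_hasDerivWithinAt2_le {D : Set ℝ} (hD : Convex ℝ D) {f f' f'' : ℝ → ℝ}
    {m : ℝ} (hf : ContinuousOn f D)
    (hf' : ∀ x ∈ interior D, HasDerivWithinAt f (f' x) (interior D) x)
    (hf'' : ∀ x ∈ interior D, HasDerivWithinAt f' (f'' x) (interior D) x)
    (hm : ∀ x ∈ interior D, f'' x ≤ -m) : StrongConcaveOn D m f := by
  simp only [strongConcaveOn_iff_convex, Real.norm_eq_abs, sq_abs]
  refine concaveOn_of_hasDerivWithinAt2_nonpos (f' := fun x ↦ f' x + m * x)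
    (f'' := fun x ↦ f'' x + m) hD (by fun_prop) (fun x hx ↦ ?_) (fun x hx ↦ ?_)
    (fun x hx ↦ by linarith [hm x hx])
  · refine ((hf' x hx).add ((hasDerivWithinAt_pow 2 x).const_mul (m / 2))).congr_deriv ?_
    norm_num
    ring
  · simpa using! (hf'' x hx).add ((hasDerivWithinAt_id x _).const_mul m)

variable {E : Type*} [NormedAddCommGroup E] [NormedSpace ℝ E] {f : E → ℝ} {x : E}

theorem le_add_sub_of_strongConcaveOn_of_hasLineDerivAt {s : Set E} {m f' : ℝ} {y : E}
    (hf : StrongConcaveOn s m f) (hx : x ∈ s) (hy : y ∈ s)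
    (hf' : HasLineDerivAt ℝ f f' x (y - x)) :
    f y ≤ f x + f' - m / 2 * ‖y - x‖ ^ 2 := by
  have chord_le_slope : ∀ᶠ t in 𝓝[>] (0 : ℝ),
      f y - f x + (1 - t) * (m / 2 * ‖y - x‖ ^ 2) ≤ t⁻¹ * (f (x + t • (y - x)) - f x) := by
    filter_upwards [Ioo_mem_nhdsGT one_pos] with t ⟨ht₀, ht₁⟩
    have h := hf.2 hx hy (sub_nonneg.2 ht₁.le) ht₀.le (sub_add_cancel 1 t)
    rw [show (1 - t) • x + t • y = x + t • (y - x) by module, norm_sub_rev] at h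
    rw [le_inv_mul_iff₀ ht₀]
    simp only [smul_eq_mul] at h
    linarith
  have chord_tendsto : Tendsto (fun t : ℝ ↦ f y - f x + (1 - t) * (m / 2 * ‖y - x‖ ^ 2))
      (𝓝[>] 0) (𝓝 (f y - f x + (1 - 0) * (m / 2 * ‖y - x‖ ^ 2))) :=
    (Continuous.tendsto (by fun_prop) 0).mono_left nhdsWithin_le_nhds
  have slope_tendsto : Tendsto (fun t : ℝ ↦ t⁻¹ * (f (x + t • (y - x)) - f x)) (𝓝[>] 0) (𝓝 f') := by
    simpa using hf'.tendsto_slope_zero_right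
  linarith [le_of_tendsto_of_tendsto chord_tendsto slope_tendsto chord_le_slope]

theorem opNorm_le_sqrt_of_forall_quadratic_nonneg {L : E →L[ℝ] ℝ} {M c : ℝ}
    (h : ∀ v, 0 ≤ c + L v + M / 2 * ‖v‖ ^ 2) : ‖L‖ ≤ √(2 * M * c) := by
  refine L.opNorm_le_bound (Real.sqrt_nonneg _) fun v ↦ ?_
  have discrim_nonpos : discrim (M / 2 * ‖v‖ ^ 2) (L v) c ≤ 0 := by
    refine discrim_le_zero fun t ↦ ?_
    have htv := h (t • v)
    rw [map_smul, smul_eq_mul, norm_smul, mul_pow, Real.norm_eq_abs, sq_abs] at htv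
    linarith
  calc ‖L v‖ ≤ √(2 * M * c * ‖v‖ ^ 2) := by
        apply Real.abs_le_sqrt
        rw [discrim] at discrim_nonpos
        linarith
    _ = √(2 * M * c) * ‖v‖ := by
        rw [Real.sqrt_mul' _ (sq_nonneg _), Real.sqrt_sq (norm_nonneg v)]

theorem opNorm_le_sqrt_of_strongConcaveOn_of_hasFDerivAt {f' : E →L[ℝ] ℝ} {M b : ℝ}
    (hf : StrongConcaveOn univ (-M) f) (hf' : HasFDerivAt f f' x) (hb : ∀ y, b ≤ f y) :
    ‖f'‖ ≤ √(2 * M * (f x - b)) := by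
  refine opNorm_le_sqrt_of_forall_quadratic_nonneg fun v ↦ ?_
  have h := le_add_sub_of_strongConcaveOn_of_hasLineDerivAt hf (mem_univ x) (mem_univ (x + v))
    (hf'.hasLineDerivAt (x + v - x))
  rw [add_sub_cancel_left] at h
  linarith [hb (x + v)]

end Semiconcave

theorem sqrt_two_mul_le_one_add_half {a : ℝ} (ha : 0 ≤ a) : √(2 * a) ≤ 1 + a / 2 :=
  Real.sqrt_le_iff.2 ⟨by positivity, by linarith [sq_nonneg (1 - a / 2)]⟩

-- The negative modulus `-M` expresses semiconcavity: `f` may curve upwards, but at most like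
-- `M / 2 * ‖·‖ ^ 2`.
theorem stmt_15_general {E : Type*} [NormedAddCommGroup E] [NormedSpace ℝ E] {M : ℝ} (hM : 0 ≤ M)
    {f : E → ℝ} (hf : StrongConcaveOn univ (-M) f) (hbdd : BddBelow (range f)) {x : E}
    {f' : E →L[ℝ] ℝ} (hf' : HasFDerivAt f f' x) :
    ‖f'‖ ≤ (1 + M / 2) * √(f x - sInf (range f)) := by
  have sInf_le (y : E) : sInf (range f) ≤ f y := csInf_le hbdd (mem_range_self y)
  calc ‖f'‖ ≤ √(2 * M * (f x - sInf (range f))) :=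
        opNorm_le_sqrt_of_strongConcaveOn_of_hasFDerivAt hf hf' sInf_le
    _ = √(2 * M) * √(f x - sInf (range f)) := Real.sqrt_mul (by positivity) _
    _ ≤ (1 + M / 2) * √(f x - sInf (range f)) := by
        gcongr
        exact sqrt_two_mul_le_one_add_half hM

/-- Lemma B.2 of the paper (quantitative content): if f is twice differentiable,
bounded below, and f'' ≤ M everywhere, then |f'(x)| ≤ (1 + M/2)·√(f(x) − inf f). -/
theorem stmt_15 (M : ℝ) (hM : 0 ≤ M) (f : ℝ → ℝ)
    (hf : Differentiable ℝ f) (hf' : Differentiable ℝ (deriv f))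
    (hM2 : ∀ x : ℝ, deriv (deriv f) x ≤ M)
    (hbdd : BddBelow (Set.range f)) :
    ∀ x : ℝ, |deriv f x| ≤ (1 + M / 2) * Real.sqrt (f x - sInf (Set.range f)) := by
  intro x
  have semiconcave : StrongConcaveOn univ (-M) f :=
    strongConcaveOn_of_hasDerivWithinAt2_le convex_univ hf.continuous.continuousOn
      (fun y _ ↦ (hf y).hasDerivAt.hasDerivWithinAt)
      (fun y _ ↦ (hf' y).hasDerivAt.hasDerivWithinAt) (fun y _ ↦ by simpa using hM2 y)
  rw [← Real.norm_eq_abs, norm_deriv_eq_norm_fderiv]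
  exact stmt_15_general hM semiconcave hbdd (hf x).hasFDerivAt
end
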